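/- Let A be an infinite-dimensional unital simple C*-algebra, and let B ⊆ A be a centrally large subalgebra of A such that B has tracial topological rank zero. Then A has stable rank one (the invertible elements of A are dense in A) and real rank zero (the invertible self-adjoint elements of A are dense in the set of self-adjoint elements of A). -/

import Mathlib

open Filter

/-- `a` is Cuntz subequivalent to `b` in the C*-algebra `A`: there is a sequence
`(rₙ)` in `A` with `‖rₙ * b * rₙ* - a‖ → 0`. -/
def CuntzSubeq {A : Type*} [NonUnitalCStarAlgebra A] (a b : A) : Prop :=
  ∃ r : ℕ → A,
    Tendsto (fun n => ‖r n * b * star (r n) - a‖) atTop (nhds 0)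

/-- `a` is Cuntz subequivalent to `b` relative to the subset `S` of `A`: there
is a sequence `(rₙ)` in `S` with `‖rₙ * b * rₙ* - a‖ → 0`. -/
def CuntzSubeqIn {A : Type*} [NonUnitalCStarAlgebra A] (S : Set A) (a b : A) : Prop :=
  ∃ r : ℕ → A, (∀ n, r n ∈ S) ∧
    Tendsto (fun n => ‖r n * b * star (r n) - a‖) atTop (nhds 0)

/-- A projection in a C*-algebra: a self-adjoint idempotent. -/
def IsProjection {A : Type*} [NonUnitalCStarAlgebra A] (p : A) : Prop :=
  p = star p ∧ p = p * p

/-- A C*-algebra is simple if it has no closed two-sided ideals other than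
`⊥` and `⊤`. -/
def IsSimpleCStarAlgebra (A : Type*) [NonUnitalCStarAlgebra A] : Prop :=
  ∀ I : TwoSidedIdeal A, IsClosed (I : Set A) → I = ⊥ ∨ I = ⊤

/-- The unital subalgebra `B` is centrally large in `A` (Archey–Phillips). -/
def IsCentrallyLarge {A : Type*} [CStarAlgebra A] [PartialOrder A]
    [StarOrderedRing A] (B : StarSubalgebra ℂ A) : Prop :=
  ∀ (m : ℕ) (a : Fin m → A) (ε : ℝ), 0 < ε →
    ∀ x : A, 0 ≤ x → ‖x‖ = 1 → ∀ y ∈ B, 0 ≤ y → y ≠ 0 →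
    ∃ c : Fin m → A, ∃ g ∈ B,
      0 ≤ g ∧ g ≤ 1 ∧
      (∀ j, ‖c j - a j‖ < ε) ∧
      (∀ j, (1 - g) * c j ∈ B) ∧
      CuntzSubeqIn (B : Set A) g y ∧ CuntzSubeq g x ∧
      ‖(1 - g) * x * (1 - g)‖ > 1 - ε ∧
      (∀ j, ‖g * a j - a j * g‖ < ε)

/-- The closed unital subalgebra `B` of `A` has tracial topological rank zero
(Lin), all data being taken inside `B`. -/
def TracialTopRankZeroIn {A : Type*} [CStarAlgebra A] [PartialOrder A]
    [StarOrderedRing A] (B : StarSubalgebra ℂ A) : Prop :=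
  ∀ (ε : ℝ), 0 < ε → ∀ G : Finset A, (↑G : Set A) ⊆ (B : Set A) →
    ∀ a ∈ B, 0 ≤ a → a ≠ 0 →
    ∃ p ∈ B, IsProjection p ∧ p ≠ 0 ∧
    ∃ E : NonUnitalStarSubalgebra ℂ A, (E : Set A) ⊆ (B : Set A) ∧
      FiniteDimensional ℂ E ∧ p ∈ E ∧
      (∀ z ∈ E, p * z = z ∧ z * p = z) ∧
      (∀ x ∈ G, ‖p * x - x * p‖ < ε) ∧
      (∀ x ∈ G, ∃ d ∈ E, ‖p * x * p - d‖ < ε) ∧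
      CuntzSubeqIn (B : Set A) (1 - p) a

section part1
set_option linter.unusedSectionVars false
variable {A : Type*} [CStarAlgebra A] [PartialOrder A] [StarOrderedRing A]

lemma finspec (E : StarSubalgebra ℂ A) [FiniteDimensional ℂ E] {x : A} (hx : x ∈ E) :
    (spectrum ℂ x).Finite := by
  have h1 : IsIntegral ℂ (⟨x, hx⟩ : E) := Algebra.IsIntegral.isIntegral _
  have h2 : IsIntegral ℂ x := by
    simpa using h1.map (E.subtype)
  obtain ⟨P, hP, hP0⟩ := h2
  have hP0' : Polynomial.aeval x P = 0 := hP0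
  apply (P.rootSet_finite ℂ).subset
  intro z hz
  have h3 := spectrum.subset_polynomial_aeval x P ⟨z, hz, rfl⟩
  rw [hP0'] at h3
  rw [Polynomial.mem_rootSet]
  refine ⟨hP.ne_zero, ?_⟩
  rcases subsingleton_or_nontrivial A with h | h
  · exact absurd hz (by simp [spectrum.of_subsingleton])
  · simpa using h3

lemma finspec_real (E : StarSubalgebra ℂ A) [FiniteDimensional ℂ E] {x : A} (hx : x ∈ E) :
    (spectrum ℝ x).Finite := by
  have h := finspec E hx
  have : spectrum ℝ x = (algebraMap ℝ ℂ) ⁻¹' spectrum ℂ x := by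
    rw [spectrum.preimage_algebraMap]
  rw [this]
  exact h.preimage (by intro a _ b _ h; simpa using h)

lemma closed_fd (E : StarSubalgebra ℂ A) [h : FiniteDimensional ℂ E] : IsClosed (E : Set A) := by
  have : FiniteDimensional ℂ (Subalgebra.toSubmodule E.toSubalgebra) := h
  exact Submodule.closed_of_finiteDimensional (Subalgebra.toSubmodule E.toSubalgebra)

lemma perturb_unit {x : A} (hx : (spectrum ℂ x).Finite) {η : ℝ} (hη : 0 < η) :
    ∃ t : ℝ, 0 < t ∧ t < η ∧ IsUnit (x + (t : ℂ) • (1 : A)) := by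
  have h1 : ((fun t : ℝ => -(t : ℂ)) ⁻¹' (spectrum ℂ x)).Finite :=
    hx.preimage (by intro a _ b _ h; simpa using h)
  obtain ⟨t, ht, ht'⟩ := (Set.Ioo_infinite hη).exists_notMem_finite h1
  refine ⟨t, ht.1, ht.2, ?_⟩
  simp only [Set.mem_preimage] at ht'
  rw [spectrum.notMem_iff] at ht'
  have := ht'.neg
  convert this using 1
  rw [Algebra.algebraMap_eq_smul_one, neg_smul]; abel

lemma polar (E : StarSubalgebra ℂ A) [FiniteDimensional ℂ E] {d : A} (hd : d ∈ E) {η : ℝ}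
    (hη : 0 < η) : ∃ V ∈ E, ∃ T ∈ E, star V * V = 1 ∧ V * star V = 1 ∧ 0 ≤ T ∧
      ‖V * T - d‖ < η := by
  rcases subsingleton_or_nontrivial A with h | h
  · exact ⟨1, one_mem _, 0, zero_mem _, Subsingleton.elim _ _, Subsingleton.elim _ _, le_rfl, by
      rw [Subsingleton.elim (1 * 0 - d) 0]; simpa⟩
  obtain ⟨t, ht0, ht, hu⟩ := perturb_unit (finspec E hd) hη
  set d' := d + (t : ℂ) • (1 : A) with hd'
  have hd'E : d' ∈ E := add_mem hd (SMulMemClass.smul_mem _ (one_mem _))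
  have hcl : IsClosed (E : Set A) := closed_fd E
  have hcl' := hcl
  set h := star d' * d' with hh
  have hhE : h ∈ E := mul_mem (star_mem hd'E) hd'E
  have hh0 : 0 ≤ h := star_mul_self_nonneg _
  have hhs : IsSelfAdjoint h := .of_nonneg hh0
  have hhu : IsUnit h := hu.star.mul hu
  have hpos : ∀ x ∈ spectrum ℝ h, 0 < x := by
    intro x hx
    have h1 : 0 ≤ x := spectrum_nonneg_of_nonneg hh0 hx
    rcases h1.lt_or_eq with h2 | h2
    · exact h2
    · exact absurd (h2 ▸ hx) (spectrum.zero_notMem ℝ hhu)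
  have hc : ContinuousOn (fun x : ℝ => (√x)⁻¹) (spectrum ℝ h) := by
    apply ContinuousOn.inv₀ (by fun_prop)
    intro x hx
    exact (Real.sqrt_pos.2 (hpos x hx)).ne'
  set T := cfc (fun x : ℝ => √x) h
  set S := cfc (fun x : ℝ => (√x)⁻¹) h
  have hST : S * T = 1 := by
    rw [← cfc_mul (fun x : ℝ => (√x)⁻¹) (fun x : ℝ => √x) h hc (by fun_prop)]
    rw [← cfc_one ℝ h]
    apply cfc_congr
    intro x hx
    simp [(Real.sqrt_pos.2 (hpos x hx)).ne']
  have hSs : star S = S := (cfc_predicate _ h : IsSelfAdjoint S)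
  have hSS : S * h * S = 1 := by
    conv_lhs => rw [← cfc_id' ℝ h]
    rw [← cfc_mul (fun x : ℝ => (√x)⁻¹) (fun x : ℝ => x) h hc (by fun_prop), 
      ← cfc_mul (fun x : ℝ => (√x)⁻¹ * x) (fun x : ℝ => (√x)⁻¹) h (hc.mul (by fun_prop)) hc]
    rw [← cfc_one ℝ h]
    apply cfc_congr
    intro x hx
    have := hpos x hx
    have h3 := Real.mul_self_sqrt this.le
    have h4 := (Real.sqrt_pos.2 (hpos x hx)).ne'
    simp only [Pi.one_apply]
    field_simp
    rw [sq, h3]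
  have hTE : T ∈ E := cfc_mem _ hhE
  have hSE : S ∈ E := cfc_mem _ hhE
  have hV : star (d' * S) * (d' * S) = 1 := by
    rw [star_mul, hSs, ← hSS, hh]; noncomm_ring
  have hSu : IsUnit S := by
    have hTS : T * S = 1 := by
      rw [← hST]; exact cfc_commute_cfc _ _ _
    exact ⟨⟨S, T, hST, hTS⟩, rfl⟩
  have hVu : IsUnit (d' * S) := hu.mul hSu
  refine ⟨d' * S, mul_mem hd'E hSE, T, hTE, hV, ?_, cfc_nonneg (fun x _ => Real.sqrt_nonneg x), ?_⟩
  · obtain ⟨w, hw⟩ := hVu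
    rw [← hw] at hV ⊢
    rw [Units.mul_eq_one_iff_eq_inv.1 hV]; simp
  · rw [mul_assoc, hST, mul_one, hd']
    simp only [add_sub_cancel_left, norm_smul]
    simp [abs_of_pos ht0, ht]

lemma almost_proj {h : A} (hs : IsSelfAdjoint h) {η : ℝ} (hη : η < 1/4) (hh : ‖h * h - h‖ ≤ η) :
    ∃ P : A, star P = P ∧ P * P = P ∧ ‖P - h‖ ≤ 2 * η ∧ (∃ m, P = m * h ∧ P = h * m) ∧
      (∀ E : StarSubalgebra ℂ A, IsClosed (E : Set A) → h ∈ E → P ∈ E) := by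
  have hη0 : 0 ≤ η := (norm_nonneg _).trans hh
  have hpt : ∀ x ∈ spectrum ℝ h, |x * x - x| ≤ η := by
    intro x hx
    have h1 : h * h - h = cfc (fun x : ℝ => x * x - x) h := by
      rw [cfc_sub (fun x : ℝ => x * x) (fun x => x) h, cfc_mul (fun x : ℝ => x) (fun x => x) h,
        cfc_id' ℝ h]
    rw [h1] at hh
    exact (norm_apply_le_norm_cfc (fun x : ℝ => x * x - x) h hx).trans hh
  have hne : ∀ x ∈ spectrum ℝ h, x ≠ 1/2 := by
    intro x hx h2
    have := hpt x hx
    rw [h2] at this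
    norm_num at this
    linarith
  have hc : ContinuousOn (fun x : ℝ => if 1/2 ≤ x then (1:ℝ) else 0) (spectrum ℝ h) := by
    intro x hx
    apply ContinuousAt.continuousWithinAt
    rcases lt_or_gt_of_ne (hne x hx) with h2 | h2
    · apply (continuousAt_const (y := (0:ℝ))).congr
      filter_upwards [Iio_mem_nhds h2] with y hy
      rw [if_neg (not_le.2 hy)]
    · apply (continuousAt_const (y := (1:ℝ))).congr
      filter_upwards [Ioi_mem_nhds h2] with y hy
      rw [if_pos (le_of_lt hy)]
  have hc2 : ContinuousOn (fun x : ℝ => (if 1/2 ≤ x then (1:ℝ) else 0) * (max x (1/2))⁻¹)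
      (spectrum ℝ h) := by
    apply hc.mul
    apply Continuous.continuousOn
    apply Continuous.inv₀ (by fun_prop)
    intro x; positivity
  set f := (fun x : ℝ => if 1/2 ≤ x then (1:ℝ) else 0) with hf
  have hm1 : cfc f h = cfc (fun x => f x * (max x (1/2))⁻¹) h * h := by
    conv_rhs => rw [← cfc_id' ℝ h, cfc_id' ℝ h]
    conv_rhs => arg 2; rw [← cfc_id' ℝ h]
    rw [← cfc_mul _ _ h hc2 (by fun_prop)]
    apply cfc_congr
    intro x hx
    simp only [hf]
    split_ifs with h2
    · rw [max_eq_left h2]; field_simp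
    · simp
  refine ⟨cfc f h, (cfc_predicate _ h : IsSelfAdjoint _), ?_, ?_, ⟨_, hm1, ?_⟩, ?_⟩
  · rw [← cfc_mul f f h hc hc]
    apply cfc_congr
    intro x hx
    simp only [hf]
    split_ifs <;> simp
  · conv_lhs => rw [← cfc_id' ℝ h]
    rw [cfc_id' ℝ h]
    conv_lhs => arg 1; arg 2; rw [← cfc_id' ℝ h]
    rw [← cfc_sub f (fun x => x) h hc (by fun_prop)]
    apply norm_cfc_le (by positivity)
    intro x hx
    have := hpt x hx
    have h3 : x * x - x = x * (x - 1) := by ring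
    rw [h3, abs_mul] at this
    rw [Real.norm_eq_abs]
    simp only [hf]
    split_ifs with h2
    · rw [abs_sub_comm]
      have : 1/2 ≤ |x| := h2.trans (le_abs_self x)
      nlinarith [abs_nonneg (x-1)]
    · push Not at h2
      have h4 : 1/2 ≤ |x - 1| := by rw [abs_sub_comm]; exact le_trans (by linarith) (le_abs_self _)
      simp only [zero_sub, abs_neg]
      nlinarith [abs_nonneg x]
  · rw [hm1]
    have e := (cfc_commute_cfc (fun x : ℝ => f x * (max x (1/2))⁻¹) (fun x : ℝ => x) h).eq
    simp only [cfc_id' ℝ h] at e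
    exact e
  · intro E hE hhE
    exact cfc_mem _ hhE

lemma specproj (E : StarSubalgebra ℂ A) [FiniteDimensional ℂ E] {T k : A} (hT : T ∈ E)
    (hs : IsSelfAdjoint T) (hk : 0 ≤ k) {t : ℝ} (ht : 0 < t) (hTk : ‖T - k‖ ≤ t) :
    ∃ f ∈ E, ∃ κ ∈ E, star f = f ∧ f * f = f ∧ star κ = κ ∧ f = κ * T * κ ∧ f = κ * κ * T ∧
      f = T * (κ * κ) ∧ ‖κ‖ * ‖κ‖ ≤ t⁻¹ ∧ ‖T - f * T‖ ≤ t := by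
  have hfin := finspec_real E hT
  have hcl : IsClosed (E : Set A) := closed_fd E
  have hC : ∀ f : ℝ → ℝ, ContinuousOn f (spectrum ℝ T) := fun f => hfin.continuousOn f
  have hlow : ∀ x ∈ spectrum ℝ T, -t ≤ x := by
    have h1 : IsSelfAdjoint (T - k) := hs.sub (.of_nonneg hk)
    have h2 := h1.neg_algebraMap_norm_le_self
    have h3 : algebraMap ℝ A (-t) ≤ T := by
      have h4 : algebraMap ℝ A (‖T - k‖) ≤ algebraMap ℝ A t := algebraMap_mono A hTk
      rw [map_neg]
      calc - algebraMap ℝ A t ≤ - algebraMap ℝ A (‖T - k‖) := neg_le_neg h4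
        _ ≤ T - k := h2
        _ ≤ T := by simpa using hk
    exact (algebraMap_le_iff_le_spectrum).1 h3
  set F : ℝ → ℝ := fun x => if t ≤ x then 1 else 0 with hF
  set K : ℝ → ℝ := fun x => if t ≤ x then (√x)⁻¹ else 0 with hK
  have hid : cfc (fun x : ℝ => x) T = T := cfc_id' ℝ T
  have hKK : ∀ x, F x = K x * K x * x := by
    intro x
    simp only [hF, hK]
    split_ifs with h
    · have h1 : 0 < x := ht.trans_le h
      have h2 := Real.mul_self_sqrt h1.le
      have h3 := (Real.sqrt_pos.2 h1).ne'
      field_simp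
      rw [sq, h2]
    · simp
  refine ⟨cfc F T, cfc_mem _ hT, cfc K T, cfc_mem _ hT, (cfc_predicate _ T : IsSelfAdjoint _), ?_,
    (cfc_predicate _ T : IsSelfAdjoint _), ?_, ?_, ?_, ?_, ?_⟩
  · rw [← cfc_mul F F T (hC _) (hC _)]
    apply cfc_congr
    intro x hx
    simp only [hF]
    split_ifs <;> simp
  · conv_rhs => arg 1; arg 2; rw [← hid]
    rw [← cfc_mul _ _ T (hC _) (hC _), ← cfc_mul _ _ T (hC _) (hC _)]
    apply cfc_congr
    intro x hx
    simp only [hKK]; ring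
  · conv_rhs => arg 2; rw [← hid]
    rw [← cfc_mul _ _ T (hC _) (hC _), ← cfc_mul _ _ T (hC _) (hC _)]
    apply cfc_congr
    intro x hx
    simp only [hKK]
  · conv_rhs => arg 1; rw [← hid]
    rw [← cfc_mul _ _ T (hC _) (hC _), ← cfc_mul _ _ T (hC _) (hC _)]
    apply cfc_congr
    intro x hx
    simp only [hKK]; ring
  · have h1 : ‖cfc K T‖ ≤ √(t⁻¹) := by
      apply norm_cfc_le (by positivity)
      intro x hx
      simp only [hK]
      split_ifs with h
      · rw [Real.norm_eq_abs, abs_of_nonneg (by positivity), ← Real.sqrt_inv]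
        apply Real.sqrt_le_sqrt
        gcongr
      · simp
    calc _ ≤ √(t⁻¹) * √(t⁻¹) := by gcongr
      _ = t⁻¹ := Real.mul_self_sqrt (by positivity)
  · have : T - cfc F T * T = cfc (fun x => x - F x * x) T := by
      rw [cfc_sub (fun x => x) (fun x => F x * x) T (hC _) (hC _), cfc_mul _ _ T (hC _) (hC _), hid]
    rw [this]
    apply norm_cfc_le ht.le
    intro x hx
    have := hlow x hx
    simp only [hF]
    split_ifs with h
    · simp [ht.le]
    · push Not at h
      simp only [zero_mul, sub_zero, Real.norm_eq_abs, abs_le]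
      exact ⟨this, h.le⟩

end part1

section part2
set_option linter.unusedSectionVars false
variable {A : Type*} [CStarAlgebra A] [PartialOrder A] [StarOrderedRing A]

/-- approximate multiplication -/
lemma apx_mul {x x' y y' : A} {α β M N : ℝ} (h1 : ‖x - x'‖ ≤ α) (h2 : ‖y - y'‖ ≤ β)
    (hM : ‖x'‖ ≤ M) (hN : ‖y‖ ≤ N) : ‖x * y - x' * y'‖ ≤ α * N + M * β := by
  have : x * y - x' * y' = (x - x') * y + x' * (y - y') := by noncomm_ring
  rw [this]
  have hα : 0 ≤ α := (norm_nonneg _).trans h1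
  have hM' : 0 ≤ M := (norm_nonneg _).trans hM
  calc _ ≤ ‖(x - x') * y‖ + ‖x' * (y - y')‖ := norm_add_le _ _
    _ ≤ ‖x - x'‖ * ‖y‖ + ‖x'‖ * ‖y - y'‖ := by gcongr <;> exact norm_mul_le _ _
    _ ≤ _ := by gcongr

lemma mul_bd {x y : A} {M N : ℝ} (hM : ‖x‖ ≤ M) (hN : ‖y‖ ≤ N) : ‖x * y‖ ≤ M * N := by
  have hM' : 0 ≤ M := (norm_nonneg _).trans hM
  exact (norm_mul_le _ _).trans (by gcongr)

lemma proj_norm {p : A} (h1 : star p = p) (h2 : p * p = p) : ‖p‖ ≤ 1 := by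
  have h := CStarRing.norm_star_mul_self (x := p)
  rw [h1, h2] at h
  nlinarith [norm_nonneg p]

lemma proj_norm_eq {p : A} (h1 : star p = p) (h2 : p * p = p) (h0 : p ≠ 0) : ‖p‖ = 1 := by
  have h := CStarRing.norm_star_mul_self (x := p)
  rw [h1, h2] at h
  have : 0 < ‖p‖ := norm_pos_iff.2 h0
  nlinarith

lemma isUnit_near_one {x : A} (h : ‖x - 1‖ < 1) : IsUnit x := by
  have : IsUnit (1 - (1 - x)) := isUnit_one_sub_of_norm_lt_one (by rwa [norm_sub_rev])
  simpa using this

lemma unip {n : A} (h : n * n = 0) : IsUnit (1 + n) :=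
  IsNilpotent.isUnit_one_add ⟨2, by rw [pow_two, h]⟩

lemma zmul {x y p q : A} (hx : x * p = x) (hy : q * y = y) (h : p * q = 0) : x * y = 0 := by
  rw [← hx, ← hy, mul_assoc, ← mul_assoc p, h]; simp

lemma lft {x p q : A} (hp : p * p = p) (hx : p * x * q = x) : p * x = x := by
  rw [← hx, ← mul_assoc, ← mul_assoc, hp]

lemma rgt {x p q : A} (hq : q * q = q) (hx : p * x * q = x) : x * q = x := by
  rw [← hx, mul_assoc, hq]

/-- The block matrix lemma. -/
lemma block_unit {q r s D Di Y N K b c z : A}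
    (hq : q * q = q) (hr : r * r = r) (hs : s * s = s) (h1 : q + r + s = 1)
    (hqr : q * r = 0) (hrq : r * q = 0) (hqs : q * s = 0) (hsq : s * q = 0) (hrs : r * s = 0)
    (hsr : s * r = 0)
    (hD : q * D * q = D) (hDi : q * Di * q = Di) (hDD : D * Di = q) (hDD' : Di * D = q)
    (hY : s * Y * r = Y) (hN : s * N * s = N) (hYN : Y * star Y * N = s) (hNY : N * (Y * star Y) = s)
    (hrr : star r = r) (hss : star s = s)
    (hK : K = r - star Y * N * Y) 
    (hb : q * b * s = b) (hc : s * c * q = c) (hz : s * z * s = z) {ε : ℂ} (hε : ε ≠ 0) :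
    IsUnit (D + ε • K + ε • Y + ε • star Y + b + c + z) := by
  have hY' : r * star Y * s = star Y := by
    have := congrArg star hY
    simpa [star_mul, hrr, hss, mul_assoc] using this
  set Y' := star Y with hY'd
  have qD := lft hq hD
  have Dq := rgt hq hD
  have qDi := lft hq hDi
  have Diq := rgt hq hDi
  have sY := lft hs hY
  have Yr := rgt hr hY
  have rY' := lft hr hY'
  have Y's := rgt hs hY'
  have sN := lft hs hN
  have Ns := rgt hs hN
  have qb := lft hq hb
  have bs := rgt hs hb
  have sc := lft hs hc
  have cq := rgt hq hc
  have sz := lft hs hz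
  have zs := rgt hs hz
  have YK : Y * K = 0 := by
    have e : Y * (Y' * N * Y) = (Y * Y' * N) * Y := by noncomm_ring
    rw [hK, mul_sub, Yr, e, hYN, sY, sub_self]
  have KY' : K * Y' = 0 := by
    have e : (Y' * N * Y) * Y' = Y' * (N * (Y * Y')) := by noncomm_ring
    rw [hK, sub_mul, rY', e, hNY, Y's, sub_self]
  have rK : r * K = K := by
    have e : r * (Y' * N * Y) = r * Y' * N * Y := by noncomm_ring
    rw [hK, mul_sub, hr, e, rY']
  have Kr : K * r = K := by
    have e : (Y' * N * Y) * r = Y' * N * (Y * r) := by noncomm_ring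
    rw [hK, sub_mul, hr, e, Yr]
  have KK : K * K = K := by
    nth_rewrite 1 [hK]
    have e : (Y' * N * Y) * K = Y' * N * (Y * K) := by noncomm_ring
    rw [sub_mul, rK, e, YK]; simp
  have hrK : K + Y' * N * Y = r := by rw [hK]; abel
  set x0 := D + ε • K + ε • Y + ε • Y' with hx0
  have hu0 : IsUnit x0 := by
    refine ⟨⟨x0, Di + ε⁻¹ • K + ε⁻¹ • (Y' * N) + ε⁻¹ • (N * Y), ?_, ?_⟩, rfl⟩
    · have z1 := zmul Dq rK hqr
      have z2 := zmul Dq rY' hqr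
      have z3 := zmul Dq sN hqs
      have z4 := zmul Kr qDi hrq
      have z5 := zmul Kr sN hrs
      have z6 := zmul Yr qDi hrq
      have z7 := zmul Yr sN hrs
      have z8 := zmul Y's qDi hsq
      have z9 := zmul Y's rK hsr
      have z10 := zmul Y's rY' hsr
      simp only [hx0, mul_add, add_mul, smul_mul_assoc, mul_smul_comm, ← mul_assoc, z1, z2, z3, z4,
        z5, z6, z7, z8, z9, z10, hDD, KK, YK, KY', hYN, zero_mul, smul_zero, add_zero, zero_add,
        smul_smul, mul_inv_cancel₀ hε, inv_mul_cancel₀ hε, one_smul]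
      rw [← h1, ← hrK]; abel
    · have z1 := zmul Diq rK hqr
      have z2 := zmul Diq rY' hqr
      have z3 := zmul Diq sY hqs
      have z4 := zmul Kr qD hrq
      have z5 := zmul Kr sY hrs
      have z6 := zmul Yr qD hrq
      have z7 := zmul Yr sY hrs
      have z8 := zmul Ns qD hsq
      have z9 := zmul Ns rK hsr
      have z10 := zmul Ns rY' hsr
      have e1 : N * (Y * K) = 0 := by rw [YK, mul_zero]
      simp only [hx0, mul_add, add_mul, smul_mul_assoc, mul_smul_comm, mul_assoc, z1, z2, z3, z4,
        z5, z6, z7, z8, z9, z10, hDD', KK, YK, KY', hNY, zero_mul, mul_zero, smul_zero, add_zero, zero_add,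
        smul_smul, mul_inv_cancel₀ hε, inv_mul_cancel₀ hε, one_smul]
      rw [← h1, ← hrK]; simp only [mul_assoc]; abel
  set z' := z - c * Di * b with hz'
  have sz' : s * z' = z' := by
    rw [hz', mul_sub, sz, ← mul_assoc, ← mul_assoc, sc]
  have z's : z' * s = z' := by
    rw [hz', sub_mul, zs, mul_assoc, bs]
  have n1 : (c * Di) * (c * Di) = 0 := by
    have : Di * c = 0 := zmul Diq sc hqs
    rw [mul_assoc, ← mul_assoc Di, this]; simp
  have n2 : (Di * b) * (Di * b) = 0 := by
    have : b * Di = 0 := zmul bs qDi hsq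
    rw [mul_assoc, ← mul_assoc b, this]; simp
  have Yz' : Y * z' = 0 := zmul Yr sz' hrs
  have n3 : (ε⁻¹ • (z' * N * Y)) * (ε⁻¹ • (z' * N * Y)) = 0 := by
    have : (z' * N * Y) * (z' * N * Y) = z' * N * (Y * z') * N * Y := by noncomm_ring
    rw [smul_mul_smul_comm, this, Yz']; simp
  have key : D + ε • K + ε • Y + ε • Y' + b + c + z =
      (1 + c * Di) * ((1 + ε⁻¹ • (z' * N * Y)) * x0) * (1 + Di * b) := by
    have a1 : (1 + ε⁻¹ • (z' * N * Y)) * x0 = x0 + z' := by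
      have e1 : (z' * N * Y) * D = 0 := by rw [mul_assoc, zmul Yr qD hrq, mul_zero]
      have e2 : (z' * N * Y) * K = 0 := by rw [mul_assoc, YK, mul_zero]
      have e3 : (z' * N * Y) * Y = 0 := by rw [mul_assoc, zmul Yr sY hrs, mul_zero]
      have e4 : (z' * N * Y) * Y' = z' := by
        rw [mul_assoc, mul_assoc, hNY, z's]
      rw [add_mul, one_mul, hx0]
      simp only [mul_add, mul_smul_comm, smul_mul_assoc, e1, e2, e3, e4, smul_zero, zero_add,
        smul_smul, mul_inv_cancel₀ hε, one_smul]
    have a2 : (x0 + z') * (1 + Di * b) = x0 + z' + b := by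
      have e1 : D * (Di * b) = b := by rw [← mul_assoc, hDD, qb]
      have e2 : K * (Di * b) = 0 := by rw [← mul_assoc, zmul Kr qDi hrq, zero_mul]
      have e3 : Y * (Di * b) = 0 := by rw [← mul_assoc, zmul Yr qDi hrq, zero_mul]
      have e4 : Y' * (Di * b) = 0 := by rw [← mul_assoc, zmul Y's qDi hsq, zero_mul]
      have e5 : z' * (Di * b) = 0 := by rw [← mul_assoc, zmul z's qDi hsq, zero_mul]
      rw [mul_add, mul_one, hx0]
      simp only [add_mul, smul_mul_assoc, e1, e2, e3, e4, e5, smul_zero, zero_add, add_zero]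
    have a3 : (1 + c * Di) * (x0 + z' + b) = x0 + z' + b + c + c * Di * b := by
      have e1 : (c * Di) * D = c := by rw [mul_assoc, hDD', cq]
      have e2 : (c * Di) * K = 0 := by rw [mul_assoc, zmul Diq rK hqr, mul_zero]
      have e3 : (c * Di) * Y = 0 := by rw [mul_assoc, zmul Diq sY hqs, mul_zero]
      have e4 : (c * Di) * Y' = 0 := by rw [mul_assoc, zmul Diq rY' hqr, mul_zero]
      have e5 : (c * Di) * z' = 0 := by rw [mul_assoc, zmul Diq sz' hqs, mul_zero]
      rw [add_mul, one_mul, hx0]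
      simp only [mul_add, mul_smul_comm, e1, e2, e3, e4, e5, smul_zero, zero_add, add_zero]
      abel
    rw [a1, mul_assoc, a2, a3, hz', hx0]; abel
  rw [key]
  exact ((unip n1).mul ((unip n3).mul hu0)).mul (unip n2)

end part2

section part3
set_option linter.unusedSectionVars false
variable {A : Type*} [CStarAlgebra A] [PartialOrder A] [StarOrderedRing A]

lemma nontriv_of_infdim (h : ¬ FiniteDimensional ℂ A) : Nontrivial A := by
  by_contra hn
  rw [not_nontrivial_iff_subsingleton] at hn
  exact h inferInstance

/-- the set of limits of finite sums `∑ x i * k * y i` -/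
def SumApx (k a : A) : Prop :=
  ∀ η : ℝ, 0 < η → ∃ L : List (A × A), ‖(L.map (fun u => u.1 * k * u.2)).sum - a‖ < η

lemma sums_mul_left (k b : A) (L : List (A × A)) :
    ((L.map (fun u => (b * u.1, u.2))).map (fun u => u.1 * k * u.2)).sum
      = b * (L.map (fun u => u.1 * k * u.2)).sum := by
  induction L with
  | nil => simp
  | cons u L ih =>
    rw [List.map_cons, List.map_cons, List.sum_cons, ih, List.map_cons, List.sum_cons, mul_add]
    simp only [mul_assoc]

lemma sums_mul_right (k b : A) (L : List (A × A)) :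
    ((L.map (fun u => (u.1, u.2 * b))).map (fun u => u.1 * k * u.2)).sum
      = (L.map (fun u => u.1 * k * u.2)).sum * b := by
  induction L with
  | nil => simp
  | cons u L ih =>
    rw [List.map_cons, List.map_cons, List.sum_cons, ih, List.map_cons, List.sum_cons, add_mul]
    simp only [mul_assoc]

def simpleIdeal (k : A) : TwoSidedIdeal A :=
  TwoSidedIdeal.mk' {a | SumApx k a}
    (by
      show SumApx k 0
      exact fun η hη => ⟨[], by simpa using hη⟩)
    (by
      intro x y hx hy η hη
      obtain ⟨L, hL⟩ := hx (η/2) (by linarith)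
      obtain ⟨M, hM⟩ := hy (η/2) (by linarith)
      refine ⟨L ++ M, ?_⟩
      rw [List.map_append, List.sum_append]
      calc _ = ‖((L.map (fun u => u.1 * k * u.2)).sum - x) + ((M.map (fun u => u.1 * k * u.2)).sum - y)‖ := by
            congr 1; abel
        _ ≤ _ := norm_add_le _ _
        _ < η := by linarith)
    (by
      intro x hx η hη
      obtain ⟨L, hL⟩ := hx η hη
      refine ⟨L.map (fun u => (-1 * u.1, u.2)), ?_⟩
      rw [sums_mul_left]
      have e : -1 * (L.map (fun u => u.1 * k * u.2)).sum - -x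
        = -((L.map (fun u => u.1 * k * u.2)).sum - x) := by noncomm_ring
      rw [e, norm_neg]
      exact hL)
    (by
      intro x y hy η hη
      obtain ⟨L, hL⟩ := hy (η/(‖x‖+1)) (by positivity)
      refine ⟨L.map (fun u => (x * u.1, u.2)), ?_⟩
      rw [sums_mul_left, ← mul_sub]
      rw [lt_div_iff₀ (by positivity)] at hL
      refine lt_of_le_of_lt (norm_mul_le _ _) ?_
      nlinarith [norm_nonneg x, norm_nonneg ((L.map (fun u => u.1 * k * u.2)).sum - y)])
    (by
      intro x y hy η hη
      obtain ⟨L, hL⟩ := hy (η/(‖y‖+1)) (by positivity)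
      refine ⟨L.map (fun u => (u.1, u.2 * y)), ?_⟩
      rw [sums_mul_right, ← sub_mul]
      rw [lt_div_iff₀ (by positivity)] at hL
      refine lt_of_le_of_lt (norm_mul_le _ _) ?_
      nlinarith [norm_nonneg y, norm_nonneg ((L.map (fun u => u.1 * k * u.2)).sum - x)])

lemma mem_simpleIdeal (k a : A) : a ∈ simpleIdeal k ↔ SumApx k a := by
  unfold simpleIdeal
  exact TwoSidedIdeal.mem_mk' _ _ _ _ _ _ _

lemma simple_sums (hs : IsSimpleCStarAlgebra A) {k : A} (hk : k ≠ 0) (a : A) : SumApx k a := by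
  have hcl : IsClosed (simpleIdeal k : Set A) := by
    rw [← isSeqClosed_iff_isClosed]
    intro u a hu hlim
    show a ∈ simpleIdeal k
    rw [mem_simpleIdeal]
    intro η hη
    obtain ⟨n, hn⟩ := (Metric.tendsto_atTop.1 hlim (η/2) (by linarith))
    obtain ⟨L, hL⟩ := (mem_simpleIdeal k _).1 (hu n) (η/2) (by linarith)
    refine ⟨L, ?_⟩
    have := hn n le_rfl
    rw [dist_eq_norm] at this
    calc _ = ‖((L.map (fun u => u.1 * k * u.2)).sum - u n) + (u n - a)‖ := by congr 1; abel
      _ ≤ _ := norm_add_le _ _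
      _ < η := by linarith
  rcases hs _ hcl with h | h
  · exfalso
    apply hk
    have : k ∈ simpleIdeal k := by
      rw [mem_simpleIdeal]
      intro η hη
      exact ⟨[(1,1)], by simpa using hη⟩
    rw [h] at this
    simpa using this
  · rw [← mem_simpleIdeal, h]; trivial

/-- convenient form of central largeness -/
lemma large_pack {B : StarSubalgebra ℂ A} (hl : IsCentrallyLarge B) (m : ℕ) (a : Fin m → A)
    {ε : ℝ} (hε : 0 < ε) {x : A} (hx : 0 ≤ x) (hx1 : ‖x‖ = 1) {k : A} (hk : k ∈ B) (hk0 : k ≠ 0) :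
    ∃ c : Fin m → A, ∃ g ∈ B, ∃ z ∈ B, 0 ≤ g ∧ g ≤ 1 ∧ star g = g ∧ ‖g‖ ≤ 1 ∧ ‖1 - g‖ ≤ 1 ∧
      (∀ j, ‖c j - a j‖ < ε) ∧ (∀ j, (1 - g) * c j ∈ B) ∧
      ‖z * (k * star k) * star z - g‖ < ε ∧ ‖(1 - g) * x * (1 - g)‖ > 1 - ε ∧
      (∀ j, ‖g * a j - a j * g‖ < ε) := by
  have hkk : k * star k ≠ 0 := fun h => hk0 (by simpa using h)
  obtain ⟨c, g, hg, h0, h1, hc, hcB, ⟨r, hr, hrt⟩, -, hn, hcm⟩ :=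
    hl m a ε hε x hx hx1 (k * star k) (mul_mem hk (star_mem hk)) (mul_star_self_nonneg k) hkk
  obtain ⟨n, hn'⟩ := (Metric.tendsto_atTop.1 hrt ε hε)
  have := hn' n le_rfl
  rw [dist_zero_right, norm_norm] at this
  have hg1 : ‖g‖ ≤ 1 := (CStarAlgebra.norm_le_one_iff_of_nonneg g h0).2 h1
  have h2 : ‖1 - g‖ ≤ 1 := (CStarAlgebra.norm_le_one_iff_of_nonneg (1-g) (sub_nonneg.2 h1)).2 (by simpa using h0)
  exact ⟨c, g, hg, r n, hr n, h0, h1, (IsSelfAdjoint.of_nonneg h0).star_eq, hg1, h2, hc, hcB, this, hn, hcm⟩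

end part3

section part4
set_option linter.unusedSectionVars false
variable {A : Type*} [CStarAlgebra A] [PartialOrder A] [StarOrderedRing A]

/-- `a` is a sum of elements `x * k * y` with `x, y ∈ B` -/
def BS (B : StarSubalgebra ℂ A) (k a : A) : Prop :=
  ∃ L : List (A × A), (∀ u ∈ L, u.1 ∈ B ∧ u.2 ∈ B) ∧ (L.map (fun u => u.1 * k * u.2)).sum = a

lemma BS.add {B : StarSubalgebra ℂ A} {k a b : A} (ha : BS B k a) (hb : BS B k b) : BS B k (a+b) := by
  obtain ⟨L, hL, rfl⟩ := ha
  obtain ⟨M, hM, rfl⟩ := hb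
  refine ⟨L ++ M, ?_, by simp⟩
  intro u hu
  rcases List.mem_append.1 hu with h | h
  exacts [hL u h, hM u h]

lemma BS.one {B : StarSubalgebra ℂ A} {k x y : A} (hx : x ∈ B) (hy : y ∈ B) : BS B k (x*k*y) :=
  ⟨[(x,y)], by simpa using ⟨hx, hy⟩, by simp⟩

lemma BS.sum {B : StarSubalgebra ℂ A} {k : A} {m : ℕ} (x y : Fin m → A) (hx : ∀ i, x i ∈ B)
    (hy : ∀ i, y i ∈ B) : BS B k (∑ i, x i * k * y i) := by
  refine ⟨List.ofFn (fun i => (x i, y i)), ?_, ?_⟩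
  · intro u hu
    rw [List.mem_ofFn] at hu
    obtain ⟨i, rfl⟩ := hu
    exact ⟨hx i, hy i⟩
  · rw [List.map_ofFn, List.sum_ofFn]; rfl

lemma bsimple (hs : IsSimpleCStarAlgebra A) [Nontrivial A] {B : StarSubalgebra ℂ A}
    (hl : IsCentrallyLarge B) {k : A} (hk : k ∈ B) (hk0 : k ≠ 0) :
    ∃ e : A, BS B k e ∧ ‖e - 1‖ < 1/2 := by
  obtain ⟨L, hL⟩ := simple_sums hs hk0 1 (1/8) (by norm_num)
  set m := L.length
  let x : Fin m → A := fun i => (L.get i).1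
  let y : Fin m → A := fun i => (L.get i).2
  have hsum : (L.map (fun u => u.1 * k * u.2)).sum = ∑ i, x i * k * y i := by
    conv_lhs => rw [← List.ofFn_get L]
    rw [List.map_ofFn, List.sum_ofFn]; rfl
  rw [hsum] at hL
  have hcont : Continuous (fun w : (Fin m → A) × (Fin m → A) => ∑ i, w.1 i * k * w.2 i) := by
    fun_prop
  obtain ⟨ε, hε, hball⟩ := Metric.continuous_iff.1 hcont (x, y) (1/8) (by norm_num)
  set ε' := min (ε/2) (1/100) with hε'
  have hε'0 : 0 < ε' := lt_min (by linarith) (by norm_num)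
  have hε'1 : ε' ≤ 1/100 := min_le_right _ _
  have hε'2 : ε' ≤ ε/2 := min_le_left _ _
  obtain ⟨c, g, hg, z, hz, -, -, hgs, hgn, hgn', hc, hcB, hzg, -, -⟩ :=
    large_pack hl m x hε'0 (zero_le_one) (norm_one) hk hk0
  obtain ⟨d, g', hg', z', hz', -, -, hgs', hg'n, hg'n', hd, hdB, hzg', -, -⟩ :=
    large_pack hl m (fun i => star (y i)) hε'0 (zero_le_one) (norm_one) hk hk0
  set S := ∑ i, c i * k * star (d i) with hS
  have hS1 : ‖S - 1‖ ≤ 1/4 := by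
    have h1 : ‖S - ∑ i, x i * k * y i‖ < 1/8 := by
      rw [← dist_eq_norm]
      apply hball (c, fun i => star (d i))
      rw [Prod.dist_eq, max_lt_iff]
      refine ⟨lt_of_le_of_lt ((dist_pi_le_iff (r := ε/2) (by linarith)).2 ?_) (by linarith),
        lt_of_le_of_lt ((dist_pi_le_iff (r := ε/2) (by linarith)).2 ?_) (by linarith)⟩
      · intro i
        rw [dist_eq_norm]
        exact (hc i).le.trans hε'2
      · intro i
        rw [dist_eq_norm]
        have := hd i
        rw [← norm_star, star_sub, star_star] at this
        exact this.le.trans hε'2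
    calc ‖S - 1‖ = ‖(S - ∑ i, x i * k * y i) + (∑ i, x i * k * y i - 1)‖ := by congr 1; abel
      _ ≤ _ := norm_add_le _ _
      _ ≤ 1/4 := by linarith
  have h1B : (1 - g) * S * (1 - g') = ∑ i, ((1-g) * c i) * k * (star ((1 - g') * d i)) := by
    rw [hS, Finset.mul_sum, Finset.sum_mul]
    refine Finset.sum_congr rfl fun i _ => ?_
    rw [star_mul, star_sub, star_one, hgs']
    noncomm_ring
  set G := z * (k * star k) * star z
  set G' := z' * (k * star k) * star z'
  have e1 : BS B k ((1 - g) * S * (1 - g')) := by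
    rw [h1B]
    exact BS.sum _ _ hcB (fun i => star_mem (hdB i))
  have e2 : BS B k G := by
    have : G = z * k * (star k * star z) := by simp only [G, mul_assoc]
    rw [this]; exact BS.one hz (mul_mem (star_mem hk) (star_mem hz))
  have e3 : BS B k ((1 - g) * G') := by
    have : (1 - g) * G' = ((1 - g) * z') * k * (star k * star z') := by simp only [G', mul_assoc]
    rw [this]; exact BS.one (mul_mem (sub_mem (one_mem _) hg) hz') (mul_mem (star_mem hk) (star_mem hz'))
  refine ⟨_, (e1.add e2).add e3, ?_⟩
  have : (1 - g) * S * (1 - g') + G + (1 - g) * G' - 1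
    = (1 - g) * (S - 1) * (1 - g') + (G - g) + (1 - g) * (G' - g') := by noncomm_ring
  rw [this]
  have n1 : ‖(1 - g) * (S - 1) * (1 - g')‖ ≤ 1 * (1/4) * 1 := mul_bd (mul_bd hgn' hS1) hg'n'
  have n2 : ‖(1 - g) * (G' - g')‖ ≤ 1 * ε' := mul_bd hgn' hzg'.le
  calc _ ≤ ‖(1 - g) * (S - 1) * (1 - g')‖ + ‖G - g‖ + ‖(1 - g) * (G' - g')‖ := norm_add₃_le
    _ < 1/2 := by linarith

/-- unitization of a finite dimensional subalgebra with unit `p` -/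
lemma unitize (E : NonUnitalStarSubalgebra ℂ A) [FiniteDimensional ℂ E] :
    ∃ E1 : StarSubalgebra ℂ A, FiniteDimensional ℂ E1 ∧ (∀ z ∈ E, z ∈ E1) ∧
      (∀ w ∈ E1, ∃ l : ℂ, ∃ z ∈ E, w = l • 1 + z) := by
  let E1 : StarSubalgebra ℂ A :=
    { carrier := {w | ∃ l : ℂ, ∃ z ∈ E, w = l • 1 + z}
      mul_mem' := by
        rintro _ _ ⟨l, z, hz, rfl⟩ ⟨l', z', hz', rfl⟩
        refine ⟨l * l', l • z' + l' • z + z * z', add_mem (add_mem (SMulMemClass.smul_mem _ hz')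
          (SMulMemClass.smul_mem _ hz)) (mul_mem hz hz'), ?_⟩
        simp only [add_mul, mul_add, smul_mul_assoc, one_mul, mul_smul_comm, mul_one, smul_smul, smul_add]
        rw [mul_comm l' l]; abel
      add_mem' := by
        rintro _ _ ⟨l, z, hz, rfl⟩ ⟨l', z', hz', rfl⟩
        exact ⟨l + l', z + z', add_mem hz hz', by rw [add_smul]; abel⟩
      algebraMap_mem' := fun r => ⟨r, 0, zero_mem _, by rw [Algebra.algebraMap_eq_smul_one, add_zero]⟩
      star_mem' := by
        rintro _ ⟨l, z, hz, rfl⟩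
        exact ⟨star l, star z, star_mem hz, by simp⟩ }
  refine ⟨E1, ?_, fun z hz => ⟨0, z, hz, by simp⟩, fun w hw => hw⟩
  let φ : ℂ × E →ₗ[ℂ] A := (LinearMap.toSpanSingleton ℂ A 1).coprod
    ((E.toNonUnitalSubalgebra.toSubmodule).subtype)
  have : FiniteDimensional ℂ (LinearMap.range φ) := inferInstance
  refine Submodule.finiteDimensional_of_le (S₁ := Subalgebra.toSubmodule E1.toSubalgebra) (S₂ := LinearMap.range φ) ?_
  rintro w ⟨l, z, hz, rfl⟩
  exact ⟨(l, ⟨z, hz⟩), by simp [φ]; rfl⟩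

/-- convenient form of tracial rank zero -/
lemma tr_pack {B : StarSubalgebra ℂ A} (hTR : TracialTopRankZeroIn B) {δ : ℝ} (hδ : 0 < δ)
    (G : Finset A) (hG : (↑G : Set A) ⊆ (B : Set A)) {y : A} (hy : y ∈ B) (hy1 : y ≠ 0) :
    ∃ p ∈ B, star p = p ∧ p * p = p ∧ p ≠ 0 ∧ ∃ E : StarSubalgebra ℂ A,
      FiniteDimensional ℂ E ∧ p ∈ E ∧ (∀ w ∈ E, w ∈ B) ∧ (∀ w ∈ E, p * w = w * p) ∧
      (∀ x ∈ G, ‖p * x - x * p‖ < δ) ∧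
      (∀ x ∈ G, ∃ d ∈ E, p * d = d ∧ d * p = d ∧ ‖p * x * p - d‖ < δ ∧ (star x = x → star d = d)) ∧
      ∃ s ∈ B, ‖s * (y * star y) * star s - (1 - p)‖ < δ := by
  obtain ⟨p, hp, ⟨hps, hpp⟩, hp0, E, hEB, hfd, hpE, hE, hcm, hd, ⟨r, hr, hrt⟩⟩ := hTR δ hδ G hG
    (y * star y) (mul_mem hy (star_mem hy)) (mul_star_self_nonneg y) (fun h => hy1 (by simpa using h))
  obtain ⟨E1, hf, hE1, hE1'⟩ := unitize E
  obtain ⟨n, hn'⟩ := (Metric.tendsto_atTop.1 hrt δ hδ)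
  have hn := hn' n le_rfl
  rw [dist_zero_right, norm_norm] at hn
  refine ⟨p, hp, hps.symm, hpp.symm, hp0, E1, hf, hE1 p hpE, ?_, ?_, hcm, ?_, r n, hr n, hn⟩
  · intro w hw
    obtain ⟨l, z, hz, rfl⟩ := hE1' w hw
    exact add_mem (SMulMemClass.smul_mem _ (one_mem B)) (hEB hz)
  · intro w hw
    obtain ⟨l, z, hz, rfl⟩ := hE1' w hw
    rw [mul_add, add_mul, (hE z hz).1, (hE z hz).2]; simp
  · intro x hx
    obtain ⟨d, hd, hdn⟩ := hd x hx
    by_cases hxs : star x = x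
    · have h2 : ‖p * x * p - star d‖ < δ := by
        rw [← norm_star]
        simpa [star_sub, star_mul, hxs, ← hps, mul_assoc] using hdn
      refine ⟨(2⁻¹:ℂ) • (d + star d), SMulMemClass.smul_mem _ (add_mem (hE1 _ hd) (star_mem (hE1 _ hd))), ?_, ?_, ?_, ?_⟩
      · rw [mul_smul_comm, mul_add, (hE d hd).1, (hE (star d) (star_mem hd)).1]
      · rw [smul_mul_assoc, add_mul, (hE d hd).2, (hE (star d) (star_mem hd)).2]
      · have : p * x * p - (2⁻¹:ℂ) • (d + star d) = (2⁻¹:ℂ) • ((p * x * p - d) + (p*x*p - star d)) := by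
          have : p * x * p = (2⁻¹ : ℂ) • (p * x * p + p * x * p) := by
            rw [← two_smul ℂ, smul_smul]; norm_num
          conv_lhs => rw [this]
          rw [← smul_sub]; congr 1; abel
        rw [this, norm_smul]
        have := norm_add_le (p * x * p - d) (p*x*p - star d)
        have e : ‖(2⁻¹:ℂ)‖ = 1/2 := by norm_num
        rw [e]; linarith
      · intro _
        simp [add_comm]
    · exact ⟨d, hE1 _ hd, (hE d hd).1, (hE d hd).2, hdn, fun h => absurd h hxs⟩

end part4

section part5
set_option linter.unusedSectionVars false
variable {A : Type*} [CStarAlgebra A] [PartialOrder A] [StarOrderedRing A]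

lemma lb_aux {B : StarSubalgebra ℂ A} (k : A) (L : List (A × A))
    (hL : ∀ u ∈ L, u.1 ∈ B ∧ u.2 ∈ B) : ∃ M : ℝ, 0 ≤ M ∧ ∃ G : Finset A, (↑G : Set A) ⊆ (B : Set A) ∧
      ∀ δ : ℝ, 0 < δ → ∀ p : A, ‖p‖ ≤ 1 → (∀ x ∈ G, ‖p * x - x * p‖ < δ) →
        ‖p * (L.map (fun u => u.1 * k * u.2)).sum * p‖ ≤ M * (‖p * k * p‖ + δ) := by
  classical
  induction L with
  | nil => exact ⟨0, le_rfl, ∅, by simp, fun δ _ p _ _ => by simp⟩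
  | cons u L ih =>
    obtain ⟨M, hM, G, hG, h⟩ := ih (fun v hv => hL v (List.mem_cons_of_mem _ hv))
    obtain ⟨h1, h2⟩ := hL u List.mem_cons_self
    obtain ⟨x, y⟩ := u
    simp only at h1 h2
    refine ⟨M + (‖x‖ * ‖y‖ + ‖k‖ * ‖y‖ + ‖x‖ * ‖k‖), by positivity, insert x (insert y G), ?_, ?_⟩
    · intro w hw
      simp only [Finset.coe_insert, Set.mem_insert_iff] at hw
      rcases hw with rfl | rfl | hw
      exacts [h1, h2, hG hw]
    · intro δ hδ p hp hc
      have := h δ hδ p hp (fun w hw => hc w (by simp [hw]))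
      have hx := hc x (by simp)
      have hy := hc y (by simp)
      rw [List.map_cons, List.sum_cons]
      simp only
      have e : p * (x * k * y + (L.map (fun u => u.1 * k * u.2)).sum) * p
        = (p * (L.map (fun u => u.1 * k * u.2)).sum * p) + ((p * x - x * p) * (k * (y * p))
          + (x * ((p * k * p) * y) + x * (p * (k * (y * p - p * y))))) := by noncomm_ring
      rw [e]
      have n1 : ‖(p * x - x * p) * (k * (y * p))‖ ≤ δ * (‖k‖ * (‖y‖ * 1)) :=
        mul_bd hx.le (mul_bd le_rfl (mul_bd le_rfl hp))
      have n2 : ‖x * ((p * k * p) * y)‖ ≤ ‖x‖ * (‖p * k * p‖ * ‖y‖) := mul_bd le_rfl (mul_bd le_rfl le_rfl)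
      have n3 : ‖x * (p * (k * (y * p - p * y)))‖ ≤ ‖x‖ * (1 * (‖k‖ * δ)) :=
        mul_bd le_rfl (mul_bd hp (mul_bd le_rfl (by rw [norm_sub_rev]; exact hy.le)))
      have t1 := norm_add_le (p * (L.map (fun u => u.1 * k * u.2)).sum * p) ((p * x - x * p) * (k * (y * p))
          + (x * ((p * k * p) * y) + x * (p * (k * (y * p - p * y)))))
      have t2 := norm_add_le ((p * x - x * p) * (k * (y * p)))
          ((x * ((p * k * p) * y) + x * (p * (k * (y * p - p * y)))))
      have t3 := norm_add_le (x * ((p * k * p) * y)) (x * (p * (k * (y * p - p * y))))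
      have q1 : 0 ≤ ‖x‖ * ‖y‖ * δ := by positivity
      have q2 : 0 ≤ (‖k‖ * ‖y‖ + ‖x‖ * ‖k‖) * ‖p * k * p‖ := by positivity
      nlinarith

lemma lower_bd (hs : IsSimpleCStarAlgebra A) [Nontrivial A] {B : StarSubalgebra ℂ A}
    (hl : IsCentrallyLarge B) {k : A} (hk : k ∈ B) (hk0 : k ≠ 0) :
    ∃ c : ℝ, 0 < c ∧ ∃ δ : ℝ, 0 < δ ∧ ∃ G : Finset A, (↑G : Set A) ⊆ (B : Set A) ∧
      ∀ p : A, star p = p → p * p = p → p ≠ 0 → (∀ x ∈ G, ‖p * x - x * p‖ < δ) → c ≤ ‖p * k * p‖ := by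
  obtain ⟨e, ⟨L, hL, rfl⟩, he⟩ := bsimple hs hl hk hk0
  obtain ⟨M, hM, G, hG, h⟩ := lb_aux k L hL
  refine ⟨1/(4*(M+1)), by positivity, 1/(4*(M+1)), by positivity, G, hG, ?_⟩
  intro p hps hpp hp0 hc
  have hp1 : ‖p‖ = 1 := proj_norm_eq hps hpp hp0
  have := h _ (by positivity) p hp1.le hc
  set S := (L.map (fun u => u.1 * k * u.2)).sum
  have h1 : (1:ℝ) ≤ ‖p * S * p‖ + 1/2 := by
    calc (1:ℝ) = ‖p * S * p - p * (S - 1) * p‖ := by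
          rw [← hp1]; congr 1
          rw [mul_sub, sub_mul, mul_one, hpp]; abel
      _ ≤ ‖p * S * p‖ + ‖p * (S - 1) * p‖ := norm_sub_le _ _
      _ ≤ ‖p * S * p‖ + 1 * (1/2) * 1 := by
          gcongr
          exact mul_bd (mul_bd hp1.le he.le) hp1.le
      _ = _ := by ring
  set t := 1/(4*(M+1)) with ht
  have ht' : t * (4 * (M+1)) = 1 := by rw [ht]; field_simp
  by_contra hcon
  push Not at hcon
  have ht0 : 0 < t := by positivity
  have : M * (‖p * k * p‖ + t) ≤ M * (t + t) := by gcongr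
  nlinarith

end part5

section part5b
/-! ### sequences modulo null sequences -/
open BoundedContinuousFunction Filter
variable (A : Type*) [CStarAlgebra A]

noncomputable def nullIdeal : TwoSidedIdeal (ℕ →ᵇ A) :=
  TwoSidedIdeal.mk' {f | Tendsto (fun n => f n) atTop (nhds 0)}
    (by show Tendsto (fun n => (0 : ℕ →ᵇ A) n) atTop (nhds 0); simp)
    (by
      intro f g hf hg
      have := Filter.Tendsto.add (f := fun n => f n) (g := fun n => g n) hf hg
      rw [add_zero] at this
      exact this)
    (by
      intro f hf
      have := Filter.Tendsto.neg (f := fun n => f n) hf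
      rw [neg_zero] at this
      exact this)
    (by
      intro f g hg
      have hg' : Tendsto (fun n => g n) atTop (nhds 0) := hg
      have : Tendsto (fun n => ‖f‖ * ‖g n‖) atTop (nhds 0) := by
        simpa using hg'.norm.const_mul ‖f‖
      refine squeeze_zero_norm (fun n => ?_) this
      exact (norm_mul_le _ _).trans (by gcongr; exact f.norm_coe_le_norm n))
    (by
      intro f g hg
      have hg' : Tendsto (fun n => f n) atTop (nhds 0) := hg
      have : Tendsto (fun n => ‖f n‖ * ‖g‖) atTop (nhds 0) := by
        simpa using hg'.norm.mul_const ‖g‖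
      refine squeeze_zero_norm (fun n => ?_) this
      exact (norm_mul_le _ _).trans (by gcongr; exact g.norm_coe_le_norm n))

abbrev QA := (nullIdeal A).ringCon.Quotient

variable {A}

noncomputable def qm : (ℕ →ᵇ A) →+* QA A := (nullIdeal A).ringCon.mk'

lemma qm_eq {f g : ℕ →ᵇ A} : qm f = qm g ↔ Tendsto (fun n => ‖f n - g n‖) atTop (nhds 0) := by
  rw [tendsto_zero_iff_norm_tendsto_zero.symm]
  have h1 : qm f = qm g ↔ f - g ∈ nullIdeal A := by
    rw [← TwoSidedIdeal.rel_iff]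
    exact RingCon.eq (nullIdeal A).ringCon
  rw [h1]
  exact TwoSidedIdeal.mem_mk' _ _ _ _ _ _ _

/-- bundle a bounded sequence -/
noncomputable def bs (f : ℕ → A) (h : ∃ C : ℝ, ∀ n, ‖f n‖ ≤ C) : ℕ →ᵇ A :=
  BoundedContinuousFunction.ofNormedAddCommGroup f continuous_of_discreteTopology h.choose h.choose_spec

@[simp] lemma bs_apply (f : ℕ → A) (h : ∃ C : ℝ, ∀ n, ‖f n‖ ≤ C) (n : ℕ) : bs f h n = f n := rfl

lemma qm_of_le {f g : ℕ →ᵇ A} {e : ℕ → ℝ} (he : Tendsto e atTop (nhds 0))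
    (h : ∀ n, ‖f n - g n‖ ≤ e n) : qm f = qm g :=
  qm_eq.2 (squeeze_zero (fun _ => norm_nonneg _) h he)

lemma qm_of_eq {f g : ℕ →ᵇ A} (h : ∀ n, f n = g n) : qm f = qm g := by
  congr 1; ext n; exact h n

lemma qm_star {f g : ℕ →ᵇ A} (h : qm f = qm g) : qm (star f) = qm (star g) := by
  rw [qm_eq] at h ⊢
  convert h using 2 with n
  rw [BoundedContinuousFunction.star_apply, BoundedContinuousFunction.star_apply, ← star_sub, norm_star]

lemma qm_ev {f g : ℕ →ᵇ A} (h : qm f = qm g) {ε : ℝ} (hε : 0 < ε) : ∀ᶠ n in atTop, ‖f n - g n‖ < ε :=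
  (qm_eq.1 h).eventually (gt_mem_nhds hε)

end part5b

section part6
set_option linter.unusedSectionVars false
variable {A : Type*} [CStarAlgebra A] [PartialOrder A] [StarOrderedRing A]

lemma isom_norm [Nontrivial A] {V : A} (h : star V * V = 1) : ‖V‖ ≤ 1 := by
  have := CStarRing.norm_star_mul_self (x := V)
  rw [h, norm_one] at this
  nlinarith [norm_nonneg V]

lemma lemA2 (hs : IsSimpleCStarAlgebra A) [Nontrivial A] {B : StarSubalgebra ℂ A}
    (hl : IsCentrallyLarge B) (hTR : TracialTopRankZeroIn B) {k : A} (hk : k ∈ B) (hk0 : k ≠ 0)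
    {η : ℝ} (hη : 0 < η) :
    ∃ r ∈ B, star r = r ∧ r * r = r ∧ r ≠ 0 ∧ ∃ V m m' : A, star V * V = 1 ∧ V * star V = 1 ∧
      ‖r - m * k‖ ≤ η ∧ ‖V * r - k * m'‖ ≤ η := by
  classical
  obtain ⟨c, hc, δ0, hδ0, G0, hG0, hlb⟩ := lower_bd hs hl hk hk0
  set t := c/8 with ht
  have ht0 : 0 < t := by positivity
  set δ := min δ0 (min (c/8) (η * t / 3)) with hδ
  have hδp : 0 < δ := by positivity
  have d1 : δ ≤ δ0 := min_le_left _ _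
  have d2 : δ ≤ c/8 := (min_le_right _ _).trans (min_le_left _ _)
  have d3 : δ ≤ η * t / 3 := (min_le_right _ _).trans (min_le_right _ _)
  obtain ⟨p, hp, hps, hpp, hp0, E, hfd, hpE, hEB, -, hcm, hd, -⟩ := tr_pack hTR hδp (insert k G0)
    (by intro w hw
        simp only [Finset.coe_insert, Set.mem_insert_iff] at hw
        rcases hw with rfl | hw
        exacts [hk, hG0 hw]) (one_mem B) one_ne_zero
  have hpn : ‖p‖ ≤ 1 := proj_norm hps hpp
  have hlb' := hlb p hps hpp hp0 (fun x hx => (hcm x (by simp [hx])).trans_le d1)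
  obtain ⟨d, hdE, -, -, hdn, -⟩ := hd k (by simp)
  have hkc := hcm k (by simp)
  obtain ⟨V, hVE, T, hTE, hV1, hV2, hT, hVT⟩ := polar E hdE hδp
  have hVn : ‖V‖ ≤ 1 := isom_norm hV1
  have hVn' : ‖star V‖ ≤ 1 := by rwa [norm_star]
  have hTn : c / 2 ≤ ‖T‖ := by
    have h1 : ‖V * T‖ ≤ 1 * ‖T‖ := mul_bd hVn le_rfl
    have h2 : ‖p * k * p‖ ≤ ‖p * k * p - d‖ + ‖V * T - d‖ + ‖V * T‖ := by
      calc _ = ‖(p * k * p - d) - (V * T - d) + V * T‖ := by congr 1; abel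
        _ ≤ ‖(p * k * p - d) - (V * T - d)‖ + ‖V * T‖ := norm_add_le _ _
        _ ≤ _ := by gcongr; exact norm_sub_le _ _
    linarith
  obtain ⟨f, hfE, κ, hκE, hfs, hff, hκs, -, hf1, hf2, hκn, hTf⟩ :=
    specproj E hTE (IsSelfAdjoint.of_nonneg hT) hT ht0 (by simpa using ht0.le : ‖T - T‖ ≤ t)
  have hκκ : ‖κ * κ‖ ≤ t⁻¹ := (norm_mul_le _ _).trans hκn
  have htη : t⁻¹ * (3 * δ) ≤ η := by
    rw [inv_mul_le_iff₀ ht0]; linarith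
  have key : ∀ w, ‖p * k * p - w‖ ≤ δ → ‖V * T - w‖ ≤ 3 * δ := by
    intro w hw
    calc _ = ‖(V * T - d) - (p * k * p - d) + (p * k * p - w)‖ := by congr 1; abel
      _ ≤ ‖(V * T - d) - (p * k * p - d)‖ + ‖(p * k * p - w)‖ := norm_add_le _ _
      _ ≤ ‖V * T - d‖ + ‖p * k * p - d‖ + ‖(p * k * p - w)‖ := by gcongr; exact norm_sub_le _ _
      _ ≤ 3 * δ := by linarith
  have k1 : ‖V * T - p * k‖ ≤ 3 * δ := by
    apply key
    have : p * k * p - p * k = - (p * (p * k - k * p)) := by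
      rw [mul_sub, ← mul_assoc, hpp, ← mul_assoc]; abel
    rw [this, norm_neg]
    simpa using mul_bd hpn hkc.le
  have k2 : ‖V * T - k * p‖ ≤ 3 * δ := by
    apply key
    have : p * k * p - k * p = (p * k - k * p) * p := by
      rw [sub_mul, mul_assoc k, hpp]
    rw [this]
    simpa using mul_bd hkc.le hpn
  refine ⟨f, hEB f hfE, hfs, hff, ?_, V, κ * κ * star V * p, p * (κ * κ), hV1, hV2, ?_, ?_⟩
  · rintro rfl
    simp at hTf
    linarith
  · have : f - κ * κ * star V * p * k = κ * κ * star V * (V * T - p * k) := by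
      rw [mul_sub]
      have : κ * κ * star V * (V * T) = f := by
        calc _ = κ * κ * (star V * V) * T := by noncomm_ring
          _ = f := by rw [hV1, mul_one, ← hf1]
      rw [this]; noncomm_ring
    rw [this]
    have := mul_bd (mul_bd hκκ hVn') k1
    linarith
  · have : V * f - k * (p * (κ * κ)) = (V * T - k * p) * (κ * κ) := by
      rw [hf2]; noncomm_ring
    rw [this]
    have := mul_bd k2 hκκ
    linarith

end part6

section part7
set_option linter.unusedSectionVars false
variable {A : Type*} [CStarAlgebra A] [PartialOrder A] [StarOrderedRing A]

lemma lemA1 [Nontrivial A] {B : StarSubalgebra ℂ A} (hB : IsClosed (B : Set A))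
    (hl : IsCentrallyLarge B) {a : A} (ha : ¬ IsUnit (a * star a))
    {ε : ℝ} (hε : 0 < ε) :
    ∃ k ∈ B, k ≠ 0 ∧ ∃ n : A, star n = n ∧ ‖n‖ ≤ 1 ∧ k * n = 0 ∧ n * k = 0 ∧ ‖n * a - a‖ ≤ ε := by
  set e := min (1/8) (ε / (8 * (‖a‖ + 1))) with he
  have he0 : 0 < e := by positivity
  have he1 : e ≤ 1/8 := min_le_left _ _
  have he2 : e * (8 * (‖a‖ + 1)) ≤ ε := by
    rw [← le_div_iff₀ (by positivity)]; exact min_le_right _ _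
  set h := a * star a with hh
  have h0 : 0 ≤ h := mul_star_self_nonneg a
  have hsa : IsSelfAdjoint h := IsSelfAdjoint.of_nonneg h0
  have hsp : ∀ t ∈ spectrum ℝ h, 0 ≤ t := fun t ht => spectrum_nonneg_of_nonneg h0 ht
  have hz : (0:ℝ) ∈ spectrum ℝ h := by rwa [spectrum.zero_mem_iff]
  let f : ℝ → ℝ := fun t => max 0 (1 - t / e^2)
  have hfc : Continuous f := by fun_prop
  have hf0 : ∀ t, 0 ≤ f t := fun t => le_max_left _ _
  have hf1 : ∀ t, 0 ≤ t → f t ≤ 1 := fun t ht => max_le zero_le_one (by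
    have : 0 ≤ t / e^2 := by positivity
    linarith)
  set x := cfc f h with hx
  have hx0 : 0 ≤ x := cfc_nonneg (fun t _ => hf0 t)
  have hxs : star x = x := (IsSelfAdjoint.of_nonneg hx0).star_eq
  have hx1 : ‖x‖ = 1 := by
    apply le_antisymm
    · refine norm_cfc_le zero_le_one (fun t ht => ?_)
      rw [Real.norm_of_nonneg (hf0 t)]; exact hf1 t (hsp t ht)
    · have := norm_apply_le_norm_cfc f h hz (hfc.continuousOn) hsa
      simpa [f] using this
  have hxa : ‖x * a‖ ≤ e := by
    have h2 : (x * a) * star (x * a) = cfc (fun t => f t * t * f t) h := by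
      rw [cfc_mul (fun t => f t * t) f h (by fun_prop) (by fun_prop), cfc_mul f (fun t => t) h (by fun_prop) (by fun_prop),
        cfc_id' ℝ h, star_mul, hxs, hh]
      noncomm_ring
    have h3 : ‖(x * a) * star (x * a)‖ ≤ e^2 := by
      rw [h2]
      refine norm_cfc_le (by positivity) (fun t ht => ?_)
      have ht0 := hsp t ht
      rw [Real.norm_of_nonneg (mul_nonneg (mul_nonneg (hf0 t) ht0) (hf0 t))]
      by_cases hte : t ≤ e^2
      · have := hf1 t ht0
        have := hf0 t
        have : f t * t ≤ e^2 := by nlinarith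
        nlinarith
      · have : f t = 0 := by
          apply max_eq_left
          have : 1 ≤ t / e^2 := by rw [le_div_iff₀ (by positivity)]; linarith
          linarith
        rw [this]; simp; positivity
    rw [CStarRing.norm_self_mul_star] at h3
    nlinarith [norm_nonneg (x * a)]
  obtain ⟨c, g, hg, z, hz, -, -, hgs, hgn, hgn', hc, hcB, -, hbig, -⟩ :=
    large_pack hl 1 (fun _ => x) he0 hx0 hx1 (one_mem B) one_ne_zero
  have hcx := hc 0
  set c := c 0
  set b1 := (1 - g) * c with hb1
  have hb1B : b1 ∈ B := hcB 0
  have hcn : ‖c‖ ≤ 2 := by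
    have := norm_add_le (c - x) x
    rw [sub_add_cancel] at this
    linarith
  have hb1n : ‖b1‖ ≤ 2 := by simpa using mul_bd hgn' hcn
  have hb1l : 1 - 2 * e ≤ ‖b1‖ := by
    have i1 : ‖(1 - g) * x * (1 - g)‖ ≤ ‖(1 - g) * x‖ * 1 := mul_bd le_rfl hgn'
    have i2 : ‖(1 - g) * x‖ ≤ ‖b1‖ + ‖(1 - g) * (c - x)‖ := by
      have : (1 - g) * x = b1 - (1 - g) * (c - x) := by rw [hb1]; noncomm_ring
      rw [this]; exact norm_sub_le _ _
    have i3 : ‖(1 - g) * (c - x)‖ ≤ 1 * e := mul_bd hgn' hcx.le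
    linarith
  have hb1a : ‖b1 * a‖ ≤ e * (‖a‖ + 1) := by
    have : b1 * a = (1 - g) * ((c - x) * a + x * a) := by rw [hb1]; noncomm_ring
    rw [this]
    have i1 : ‖(c - x) * a + x * a‖ ≤ e * ‖a‖ + e := (norm_add_le _ _).trans (add_le_add (mul_bd hcx.le le_rfl) hxa)
    have := mul_bd hgn' i1
    linarith
  set b := star b1 * b1 with hb
  have hbB : b ∈ B := mul_mem (star_mem hb1B) hb1B
  have hb0 : 0 ≤ b := star_mul_self_nonneg b1
  have hbs : IsSelfAdjoint b := IsSelfAdjoint.of_nonneg hb0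
  have hbn : 1/2 ≤ ‖b‖ := by
    rw [hb, CStarRing.norm_star_mul_self]; nlinarith
  have hba : ‖b * a‖ ≤ 2 * (e * (‖a‖ + 1)) := by
    rw [hb, mul_assoc]
    exact mul_bd (by rwa [norm_star]) hb1a
  have hspb : ∀ t ∈ spectrum ℝ b, 0 ≤ t := fun t ht => spectrum_nonneg_of_nonneg hb0 ht
  let u : ℝ → ℝ := fun t => (max t (1/4))⁻¹
  have hu : Continuous u := by
    apply Continuous.inv₀ (by fun_prop)
    intro t
    have := le_max_right t (1/4 : ℝ)
    positivity
  let v : ℝ → ℝ := fun t => max (t - 1/4) 0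
  have hv : Continuous v := by fun_prop
  have hut : ∀ t, v t * (1 - u t * t) = 0 := by
    intro t
    by_cases ht : t ≤ 1/4
    · have : v t = 0 := max_eq_right (by linarith)
      rw [this, zero_mul]
    · have : u t = t⁻¹ := by simp only [u]; rw [max_eq_left (by linarith)]
      have ht0 : t ≠ 0 := by intro h; rw [h] at ht; norm_num at ht
      rw [this, inv_mul_cancel₀ ht0]; simp
  set k := cfc v b with hk
  set n := cfc (fun t => 1 - u t * t) b with hn
  have hn' : n = 1 - cfc u b * b := by
    rw [hn, cfc_sub (fun _ => (1:ℝ)) (fun t => u t * t) b (by fun_prop) (by fun_prop),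
      cfc_mul u (fun t => t) b (by fun_prop) (by fun_prop), cfc_id' ℝ b, cfc_const_one ℝ b]
  have hkn : k * n = 0 := by
    rw [hk, hn, ← cfc_mul v _ b (by fun_prop) (by fun_prop)]
    simp only [hut]
    exact cfc_const_zero ℝ b
  have hns : star n = n := by
    have : IsSelfAdjoint n := by rw [hn]; exact cfc_predicate _ _
    exact this.star_eq
  have hks : star k = k := by
    have : IsSelfAdjoint k := by rw [hk]; exact cfc_predicate _ _
    exact this.star_eq
  refine ⟨k, ?_, ?_, n, hns, ?_, hkn, ?_, ?_⟩
  · rw [hk]; exact cfc_mem v hbB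
  · intro hk0
    have hm : ‖b‖ ∈ spectrum ℝ b := CStarAlgebra.norm_mem_spectrum_of_nonneg hb0
    have := norm_apply_le_norm_cfc v b hm (hv.continuousOn) hbs
    rw [← hk, hk0, norm_zero] at this
    have h2 : v ‖b‖ = ‖b‖ - 1/4 := max_eq_left (by linarith)
    have h3 := Real.le_norm_self (v ‖b‖)
    linarith
  · refine norm_cfc_le zero_le_one (fun t ht => ?_)
    have ht0 := hspb t ht
    have h1 : 0 < max t (1/4 : ℝ) := lt_of_lt_of_le (by norm_num) (le_max_right _ _)
    have h2 : u t * t ≤ 1 := by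
      simp only [u]; rw [inv_mul_le_iff₀ h1]; simp
    have h3 : 0 ≤ u t * t := mul_nonneg (inv_nonneg.2 h1.le) ht0
    rw [Real.norm_of_nonneg (by linarith)]; linarith
  · have := congrArg star hkn
    rwa [star_mul, hks, hns, star_zero] at this
  · have : n * a - a = -(cfc u b * (b * a)) := by rw [hn']; noncomm_ring
    rw [this, norm_neg]
    have hun : ‖cfc u b‖ ≤ 4 := by
      refine norm_cfc_le (by norm_num) (fun t ht => ?_)
      have h1 : (1/4:ℝ) ≤ max t (1/4 : ℝ) := le_max_right _ _
      have h2 : 0 < max t (1/4 : ℝ) := by linarith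
      rw [Real.norm_of_nonneg (inv_nonneg.2 h2.le)]
      rw [inv_le_comm₀ h2 (by norm_num)]; linarith
    have := mul_bd hun hba
    linarith

end part7

section part8
set_option linter.unusedSectionVars false
variable {A : Type*} [CStarAlgebra A] [PartialOrder A] [StarOrderedRing A]

lemma corner_scalar [Nontrivial A] {B : StarSubalgebra ℂ A}
    (hl : IsCentrallyLarge B) {r : A} (hr : r ∈ B) (hrs : star r = r) (hrr : r * r = r)
    (hsc : ∀ b ∈ B, ∃ l : ℂ, r * b * r = l • r) (a : A) : ∃ l : ℂ, r * a * r = l • r := by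
  have hrn : ‖r‖ ≤ 1 := proj_norm hrs hrr
  have hrn' : ‖1 - r‖ ≤ 1 := proj_norm (by rw [star_sub, hrs, star_one])
    (by rw [mul_sub, sub_mul, sub_mul, hrr]; simp)
  have hcl : IsClosed ((ℂ ∙ r : Submodule ℂ A) : Set A) := Submodule.closed_of_finiteDimensional _
  have key : ∀ x : A, 0 ≤ x → ‖x‖ = 1 → r * x = x → x * r = x → x ∈ (ℂ ∙ r : Submodule ℂ A) := by
    intro x hx hx1 hrx hxr
    show x ∈ ((ℂ ∙ r : Submodule ℂ A) : Set A)
    rw [← hcl.closure_eq, Metric.mem_closure_iff]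
    intro η hη
    set ε := min (1/8) (η/4) with hε
    have hε0 : 0 < ε := by positivity
    have e1 : ε ≤ 1/8 := min_le_left _ _
    have e2 : ε ≤ η/4 := min_le_right _ _
    obtain ⟨c, g, hg, z, hz, -, -, hgs, hgn, hgn', hc, hcB, -, hbig, hcm⟩ :=
      large_pack hl 2 ![x, r] hε0 hx hx1 (one_mem B) one_ne_zero
    have hcx := hc 0
    have hgr := hcm 1
    have hB := hcB 0
    simp only [Matrix.cons_val_zero, Matrix.cons_val_one] at hcx hgr
    obtain ⟨l, hl'⟩ := hsc _ hB
    obtain ⟨μ, hμ⟩ := hsc _ (sub_mem (one_mem B) hg)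
    have i1 : r * ((1 - g) * x) * r = μ • x := by
      calc _ = r * (1 - g) * (x * r) := by noncomm_ring
        _ = r * (1 - g) * (r * x) := by rw [hxr, hrx]
        _ = (r * (1 - g) * r) * x := by noncomm_ring
        _ = μ • x := by rw [hμ, smul_mul_assoc, hrx]
    have i2 : ‖l • r - μ • x‖ ≤ ε := by
      rw [← hl', ← i1]
      have : r * ((1 - g) * c 0) * r - r * ((1 - g) * x) * r = r * ((1 - g) * (c 0 - x)) * r := by noncomm_ring
      rw [this]
      have := mul_bd (mul_bd hrn (mul_bd hgn' hcx.le)) hrn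
      linarith
    have i3 : 1 - ε < ‖(1 - g) * x‖ := by
      have := mul_bd (le_refl ‖(1 - g) * x‖) hgn'
      linarith
    have i4 : (1 - g) * x = μ • x - (1 - r) * (g * r - r * g) * x := by
      have : (1 - r) * (g * r - r * g) * x = g * (r * x) - r * g * (r * x) - r * g * x + r * r * g * x := by
        noncomm_ring
      rw [this, hrr, hrx, ← i1]
      have : r * ((1 - g) * x) * r = r * (x * r) - r * g * (x * r) := by noncomm_ring
      rw [this, hxr, hrx]; noncomm_ring
    have i5 : ‖(1 - r) * (g * r - r * g) * x‖ ≤ 1 * ε * 1 := mul_bd (mul_bd hrn' hgr.le) hx1.le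
    have i6 : 3/4 ≤ ‖μ‖ := by
      have := norm_sub_le (μ • x) ((1 - r) * (g * r - r * g) * x)
      rw [← i4, norm_smul, hx1] at this
      linarith
    have hμ0 : μ ≠ 0 := by intro h; rw [h, norm_zero] at i6; linarith
    refine ⟨(μ⁻¹ * l) • r, Submodule.smul_mem _ _ (Submodule.mem_span_singleton_self r), ?_⟩
    rw [dist_eq_norm, norm_sub_rev]
    have : (μ⁻¹ * l) • r - x = μ⁻¹ • (l • r - μ • x) := by
      rw [smul_sub, smul_smul, smul_smul, inv_mul_cancel₀ hμ0, one_smul]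
    rw [this, norm_smul, norm_inv]
    have : ‖μ‖⁻¹ * ‖l • r - μ • x‖ ≤ 2 * ε := by
      have : ‖μ‖⁻¹ ≤ 2 := by
        rw [inv_le_comm₀ (by linarith) (by norm_num)]; linarith
      gcongr
    linarith
  have hspan : ∀ a ∈ (Submodule.span ℂ {a : A | 0 ≤ a}), r * a * r ∈ (ℂ ∙ r : Submodule ℂ A) := by
    intro a ha
    induction ha using Submodule.span_induction with
    | mem x hx =>
      have hx : 0 ≤ x := hx
      have hy : 0 ≤ r * x * r := by
        have := star_left_conjugate_nonneg hx r
        rwa [hrs] at this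
      by_cases h0 : r * x * r = 0
      · rw [h0]; exact zero_mem _
      · have hn : ‖r * x * r‖ ≠ 0 := by simpa using h0
        have := key ((‖r * x * r‖⁻¹ : ℝ) • (r * x * r)) (smul_nonneg (by positivity) hy)
          (by rw [norm_smul, norm_inv, norm_norm, inv_mul_cancel₀ hn])
          (by rw [mul_smul_comm, ← mul_assoc, ← mul_assoc, hrr])
          (by rw [smul_mul_assoc, mul_assoc (r * x), hrr])
        have h2 := Submodule.smul_mem _ (‖r * x * r‖ : ℂ) this
        rw [← Complex.coe_smul, smul_smul] at h2
        rwa [Complex.ofReal_inv, mul_inv_cancel₀ (by exact_mod_cast hn), one_smul] at h2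
    | zero => simp
    | add x y _ _ hx hy => rw [mul_add, add_mul]; exact add_mem hx hy
    | smul t x _ hx => rw [mul_smul_comm, smul_mul_assoc]; exact Submodule.smul_mem _ _ hx
  have := hspan a (by rw [CStarAlgebra.span_nonneg]; trivial)
  obtain ⟨l, hl⟩ := Submodule.mem_span_singleton.1 this
  exact ⟨l, hl.symm⟩

lemma findim_of_corner (hs : IsSimpleCStarAlgebra A) {r : A} (hr0 : r ≠ 0)
    (hsc : ∀ a : A, ∃ l : ℂ, r * a * r = l • r) : FiniteDimensional ℂ A := by
  obtain ⟨L, hL⟩ := simple_sums hs hr0 1 (1/2) (by norm_num)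
  have hu := isUnit_near_one (x := (L.map (fun u => u.1 * r * u.2)).sum) (by linarith)
  let x : Fin L.length → A := fun i => (L.get i).1
  let y : Fin L.length → A := fun i => (L.get i).2
  have hsum : (L.map (fun u => u.1 * r * u.2)).sum = ∑ i, x i * r * y i := by
    conv_lhs => rw [← List.ofFn_get L]
    rw [List.map_ofFn, List.sum_ofFn]; rfl
  rw [hsum] at hu
  set S := ∑ i, x i * r * y i with hS
  let W : Submodule ℂ A := Submodule.span ℂ (Set.range (fun ij : Fin L.length × Fin L.length => x ij.1 * r * y ij.2))
  have hW : FiniteDimensional ℂ W := FiniteDimensional.span_of_finite ℂ (Set.finite_range _)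
  have hmem : ∀ a, S * a * S ∈ W := by
    intro a
    rw [hS, Finset.sum_mul, Finset.sum_mul_sum]
    refine sum_mem fun i _ => sum_mem fun j _ => ?_
    obtain ⟨l, hl⟩ := hsc (y i * a * x j)
    have : x i * r * y i * a * (x j * r * y j) = l • (x i * r * y j) := by
      calc _ = x i * (r * (y i * a * x j) * r) * y j := by noncomm_ring
        _ = _ := by rw [hl]; simp
    rw [this]
    exact Submodule.smul_mem _ _ (Submodule.subset_span ⟨(i, j), rfl⟩)
  let φ : A →ₗ[ℂ] W := LinearMap.codRestrict W
    ((LinearMap.mulRight ℂ S).comp (LinearMap.mulLeft ℂ S)) (fun a => by simpa using hmem a)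
  refine FiniteDimensional.of_injective φ ?_
  intro a b hab
  have : S * a * S = S * b * S := by simpa [φ] using congrArg Subtype.val hab
  exact hu.mul_left_cancel (hu.mul_right_cancel this)

lemma lemNM (hs : IsSimpleCStarAlgebra A) (hinf : ¬ FiniteDimensional ℂ A) [Nontrivial A]
    {B : StarSubalgebra ℂ A} (hB : IsClosed (B : Set A))
    (hl : IsCentrallyLarge B) {r : A} (hr : r ∈ B) (hrs : star r = r) (hrr : r * r = r) (hr0 : r ≠ 0) :
    ∃ k1 ∈ B, ∃ k2 ∈ B, k1 ≠ 0 ∧ k2 ≠ 0 ∧ star k1 = k1 ∧ star k2 = k2 ∧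
      k1 * k2 = 0 ∧ k2 * k1 = 0 ∧ k1 * r = k1 ∧ r * k1 = k1 ∧ k2 * r = k2 ∧ r * k2 = k2 := by
  have h1 : ∃ b ∈ B, ¬ ∃ l : ℂ, r * b * r = l • r := by
    by_contra hcon
    push Not at hcon
    exact hinf (findim_of_corner hs hr0 (corner_scalar hl hr hrs hrr (fun b hb => hcon b hb)))
  have h2 : ∃ b ∈ B, star b = b ∧ ¬ ∃ l : ℂ, r * b * r = l • r := by
    obtain ⟨b, hb, hbl⟩ := h1
    by_contra hcon
    push Not at hcon
    obtain ⟨l, hl1⟩ := hcon (b + star b) (add_mem hb (star_mem hb)) (by simp [add_comm])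
    obtain ⟨l', hl2⟩ := hcon (Complex.I • (b - star b)) (SMulMemClass.smul_mem _ (sub_mem hb (star_mem hb)))
      (by simp [← smul_neg])
    apply hbl
    refine ⟨2⁻¹ * (l - Complex.I * l'), ?_⟩
    have : b = (2⁻¹:ℂ) • ((b + star b) - Complex.I • (Complex.I • (b - star b))) := by
      rw [smul_smul, Complex.I_mul_I, neg_one_smul]
      have : b + star b - -(b - star b) = (2:ℂ) • b := by rw [two_smul]; abel
      rw [this, smul_smul]; norm_num
    conv_lhs => rw [this]
    rw [mul_smul_comm, smul_mul_assoc, mul_sub, sub_mul, hl1, mul_smul_comm, smul_mul_assoc, hl2, smul_smul,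
      ← sub_smul, smul_smul]
  obtain ⟨b, hb, hbs, hbl⟩ := h2
  set x0 := r * b * r with hx0
  have hx0s : star x0 = x0 := by rw [hx0]; simp [star_mul, hrs, hbs, mul_assoc]
  have hx0B : x0 ∈ B := mul_mem (mul_mem hr hb) hr
  have hrx : r * x0 = x0 := by rw [hx0, ← mul_assoc, ← mul_assoc, hrr]
  have hxr : x0 * r = x0 := by rw [hx0, mul_assoc, hrr]
  have h3 : ∃ l : ℝ, ¬ (x0 ≤ l • r) ∧ ¬ (l • r ≤ x0) := by
    by_contra hcon
    push Not at hcon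
    have hc1 : IsClosed {l : ℝ | x0 ≤ l • r} := isClosed_le (by fun_prop) (by fun_prop)
    have hc2 : IsClosed {l : ℝ | l • r ≤ x0} := isClosed_le (by fun_prop) (by fun_prop)
    have hpc := isPreconnected_closed_iff.1 (isPreconnected_univ (α := ℝ)) _ _ hc1 hc2
      (fun l _ => by
        by_cases h : x0 ≤ l • r
        · exact Or.inl h
        · exact Or.inr (hcon l h))
      ⟨‖x0‖, trivial, by
        have := star_left_conjugate_le_conjugate (IsSelfAdjoint.le_algebraMap_norm_self (a := x0) hx0s) r
        rw [hrs, hrx, hxr, Algebra.algebraMap_eq_smul_one, mul_smul_comm, mul_one, smul_mul_assoc, hrr] at this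
        exact this⟩
      ⟨-‖x0‖, trivial, by
        have := star_left_conjugate_le_conjugate (IsSelfAdjoint.neg_algebraMap_norm_le_self (a := x0) hx0s) r
        rw [hrs, hrx, hxr, Algebra.algebraMap_eq_smul_one, mul_neg, neg_mul, mul_smul_comm, mul_one, smul_mul_assoc, hrr] at this
        show (-‖x0‖) • r ≤ x0
        rwa [neg_smul]⟩
    obtain ⟨l, -, ha, hb⟩ := hpc
    have : x0 = l • r := le_antisymm ha hb
    exact hbl ⟨(l:ℂ), by rw [this, Complex.coe_smul]⟩
  obtain ⟨l, hl1, hl2⟩ := h3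
  set h := x0 - l • r with hh
  have hhs : IsSelfAdjoint h := by
    rw [isSelfAdjoint_iff, hh, star_sub, hx0s, star_smul, hrs]; simp
  have hhB : h ∈ B := sub_mem hx0B (by rw [← Complex.coe_smul]; exact SMulMemClass.smul_mem _ hr)
  have hhr : h * (1 - r) = 0 := by
    rw [hh, mul_sub, sub_mul, mul_one, mul_one, sub_mul, hxr, smul_mul_assoc, hrr]; abel
  set k1 := cfc (fun t : ℝ => max t 0) h with hk1
  set k2 := cfc (fun t : ℝ => max (-t) 0) h with hk2
  have hk1p : 0 ≤ k1 := cfc_nonneg (fun t _ => le_max_right _ _)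
  have hk2p : 0 ≤ k2 := cfc_nonneg (fun t _ => le_max_right _ _)
  have hk1s := (IsSelfAdjoint.of_nonneg hk1p).star_eq
  have hk2s := (IsSelfAdjoint.of_nonneg hk2p).star_eq
  have hk12 : k1 * k2 = 0 := by
    rw [hk1, hk2, ← cfc_mul _ _ h (by fun_prop) (by fun_prop)]
    have : (fun t : ℝ => max t 0 * max (-t) 0) = fun _ => 0 := by
      funext t
      rcases le_total t 0 with ht | ht
      · rw [max_eq_right ht, zero_mul]
      · rw [max_eq_right (by linarith : -t ≤ 0), mul_zero]
    rw [this]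
    exact cfc_const_zero ℝ h
  have hk21 : k2 * k1 = 0 := by
    have := congrArg star hk12
    rwa [star_mul, hk1s, hk2s, star_zero] at this
  have hdiff : h = k1 - k2 := by
    rw [hk1, hk2, ← cfc_sub _ _ h (by fun_prop) (by fun_prop)]
    conv_lhs => rw [← cfc_id' ℝ h]
    congr 1
    funext t
    rcases le_total t 0 with ht | ht
    · rw [max_eq_right ht, max_eq_left (by linarith)]; ring
    · rw [max_eq_left ht, max_eq_right (by linarith)]; ring
  have absorb : ∀ k : A, star k = k → k * k * (1 - r) = 0 → k * r = k ∧ r * k = k := by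
    intro k hk hkk
    have h0 : k * (1 - r) = 0 := by
      rw [← CStarRing.star_mul_self_eq_zero_iff, star_mul, hk]
      calc _ = star (1 - r) * (k * k * (1 - r)) := by noncomm_ring
        _ = 0 := by rw [hkk, mul_zero]
    have h1 : k * r = k := by
      rw [mul_sub, mul_one, sub_eq_zero] at h0; exact h0.symm
    refine ⟨h1, ?_⟩
    have := congrArg star h1
    rwa [star_mul, hk, hrs] at this
  have hA1 := absorb k1 hk1s (by
    have : k1 * k1 = k1 * h := by rw [hdiff, mul_sub, hk12, sub_zero]
    rw [this, mul_assoc, hhr, mul_zero])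
  have hA2 := absorb k2 hk2s (by
    have : k2 * k2 = -(k2 * h) := by rw [hdiff, mul_sub, hk21]; abel
    rw [this, neg_mul, mul_assoc, hhr, mul_zero, neg_zero])
  refine ⟨k1, cfc_mem _ hhB, k2, cfc_mem _ hhB, ?_, ?_, hk1s, hk2s, hk12, hk21, hA1.1, hA1.2, hA2.1, hA2.2⟩
  · intro h0
    apply hl1
    rw [h0, zero_sub] at hdiff
    rw [← sub_nonpos, ← hh, hdiff]
    simpa using hk2p
  · intro h0
    apply hl2
    rw [h0, sub_zero] at hdiff
    rw [← sub_nonneg, ← hh, hdiff]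
    exact hk1p

end part8

section part9
set_option linter.unusedSectionVars false

lemma F_alg {Q : Type*} [Ring Q] {P W Ws G U Us R N Ns K V Vs T : Q} (hPP : P * P = P)
    (cW : P * W = W * P) (cWs : P * Ws = Ws * P) (cG : P * G = G * P) (cR : P * R = R * P)
    (cN : P * N = N * P) (cNs : P * Ns = Ns * P) (cK : P * K = K * P) (cV : P * V = V * P)
    (cVs : P * Vs = Vs * P) (hW : W = (1 - G) * U) (hWs : Ws = Us * (1 - G)) (hGU : G * U = U * G)
    (hU : Us * U = 1) (hRU : R * U = 0) (hN : N * Ns = G) (hNR : N * R = N) (hRN : R * Ns = Ns)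
    (hNK : N * K = 0) (hRK : R * K = K) (hV2 : V * Vs = 1) (hV1 : Vs * V = 1) (hRR : R * R = R)
    (hVT : V * T = P * W * P) (hTV : T * Vs = P * Ws * P) :
    ((P * R * P) * V * (P * N * P) + (1 - P * R * P)) *
      ((P * Ns * P) * (2 - P * G * P) * Vs * (P * R * P) + (1 - P * R * P)) = 1 ∧
    ((P * R * P) * V * (P * N * P) + (1 - P * R * P)) * (P * K * P) = 0 := by
  have red : ∀ {x : Q}, P * x = x * P → P * x * P = x * P := by
    intro x hx; rw [hx, mul_assoc, hPP]
  rw [red cR, red cN, red cNs, red cG, red cK]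
  rw [red cW] at hVT
  rw [red cWs] at hTV
  have hX : R * P * V * (N * P) = R * V * N * P := by
    calc _ = R * (P * V) * N * P := by noncomm_ring
      _ = R * V * (P * N) * P := by rw [cV]; noncomm_ring
      _ = R * V * N * (P * P) := by rw [cN]; noncomm_ring
      _ = _ := by rw [hPP]
  have hY : Ns * P * (2 - G * P) * Vs * (R * P) = Ns * (2 - G) * Vs * R * P := by
    have e : P * (2 - G * P) = (2 - G) * P := by
      calc _ = P * 2 - (P * G) * P := by noncomm_ring
        _ = 2 * P - G * (P * P) := by rw [cG]; noncomm_ring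
        _ = _ := by rw [hPP]; noncomm_ring
    calc _ = Ns * (P * (2 - G * P)) * Vs * R * P := by noncomm_ring
      _ = Ns * (2 - G) * (P * Vs) * R * P := by rw [e]; noncomm_ring
      _ = Ns * (2 - G) * Vs * (P * R) * P := by rw [cVs]; noncomm_ring
      _ = Ns * (2 - G) * Vs * R * (P * P) := by rw [cR]; noncomm_ring
      _ = _ := by rw [hPP]
  rw [hX, hY]
  have hTT : T * T = (1 - G) * (1 - G) * P := by
    calc T * T = T * (Vs * V) * T := by rw [hV1, mul_one]
      _ = (T * Vs) * (V * T) := by noncomm_ring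
      _ = Ws * (P * W) * P := by rw [hVT, hTV]; noncomm_ring
      _ = Ws * W * (P * P) := by rw [cW]; noncomm_ring
      _ = Us * (1 - G) * ((1 - G) * U) * P := by rw [hPP, hW, hWs]
      _ = (1 - G) * (1 - G) * P := by
        have e : (1 - G) * U = U * (1 - G) := by rw [sub_mul, hGU]; noncomm_ring
        rw [e]
        calc _ = Us * ((1 - G) * U) * (1 - G) * P := by noncomm_ring
          _ = (Us * U) * (1 - G) * (1 - G) * P := by rw [e]; noncomm_ring
          _ = _ := by rw [hU, one_mul]
  have hRW : R * W = 0 := by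
    have e : (1 - G) * U = U * (1 - G) := by rw [sub_mul, hGU]; noncomm_ring
    rw [hW, e, ← mul_assoc, hRU, zero_mul]
  have hmain : R * V * (G * (2 - G)) * Vs * P = R * P := by
    have e1 : G * (2 - G) = 1 - (1 - G) * (1 - G) := by noncomm_ring
    have e2 : V * ((1 - G) * (1 - G)) * Vs * P = W * Ws * P := by
      calc _ = V * ((1 - G) * (1 - G)) * (P * Vs) := by rw [cVs]; noncomm_ring
        _ = V * ((1 - G) * (1 - G) * P) * Vs := by noncomm_ring
        _ = (V * T) * (T * Vs) := by rw [← hTT]; noncomm_ring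
        _ = W * (P * Ws) * P := by rw [hVT, hTV]; noncomm_ring
        _ = W * Ws * (P * P) := by rw [cWs]; noncomm_ring
        _ = _ := by rw [hPP]
    calc _ = R * (V * Vs) * P - R * (V * ((1 - G) * (1 - G)) * Vs * P) := by rw [e1]; noncomm_ring
      _ = R * P - (R * W) * Ws * P := by rw [hV2, e2]; noncomm_ring
      _ = R * P := by rw [hRW]; noncomm_ring
  have hNP : N * P * (1 - R * P) = 0 := by
    calc _ = N * P - N * (P * R) * P := by noncomm_ring
      _ = N * P - N * R * (P * P) := by rw [cR]; noncomm_ring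
      _ = 0 := by rw [hPP, hNR, sub_self]
  have hPRR : P * (R * P) = R * P := by rw [← mul_assoc, cR, mul_assoc, hPP]
  constructor
  · have h1 : R * V * N * P * (Ns * (2 - G) * Vs * R * P) = R * P := by
      have e3 : P * (Ns * (2 - G) * Vs * R * P) = Ns * (2 - G) * Vs * R * P := by
        calc _ = (P * Ns) * (2 - G) * Vs * R * P := by noncomm_ring
          _ = Ns * (2 * P - (P * G)) * Vs * R * P := by rw [cNs]; noncomm_ring
          _ = Ns * (2 - G) * (P * Vs) * R * P := by rw [cG]; noncomm_ring
          _ = Ns * (2 - G) * Vs * (P * (R * P)) := by rw [cVs]; noncomm_ring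
          _ = _ := by rw [hPRR]; noncomm_ring
      calc _ = R * V * N * (P * (Ns * (2 - G) * Vs * R * P)) := by noncomm_ring
        _ = R * V * ((N * Ns) * (2 - G)) * Vs * (R * P) := by rw [e3]; noncomm_ring
        _ = R * V * (G * (2 - G)) * Vs * (P * R) := by rw [hN, cR]
        _ = (R * V * (G * (2 - G)) * Vs * P) * R := by noncomm_ring
        _ = R * (P * R) := by rw [hmain]; noncomm_ring
        _ = R * P := by rw [cR, ← mul_assoc, hRR]
    have h2 : R * V * N * P * (1 - R * P) = 0 := by
      calc _ = R * V * (N * P * (1 - R * P)) := by noncomm_ring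
        _ = 0 := by rw [hNP, mul_zero]
    have h3 : (1 - R * P) * (Ns * (2 - G) * Vs * R * P) = 0 := by
      have e4 : R * P * (Ns * (2 - G) * Vs * R * P) = Ns * (2 - G) * Vs * R * P := by
        calc _ = R * (P * Ns) * (2 - G) * Vs * R * P := by noncomm_ring
          _ = (R * Ns) * (2 * P - P * G) * Vs * R * P := by rw [cNs]; noncomm_ring
          _ = Ns * (2 - G) * (P * Vs) * R * P := by rw [cG, hRN]; noncomm_ring
          _ = Ns * (2 - G) * Vs * (P * (R * P)) := by rw [cVs]; noncomm_ring
          _ = _ := by rw [hPRR]; noncomm_ring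
      rw [sub_mul, e4, one_mul, sub_self]
    have h4 : (1 - R * P) * (1 - R * P) = 1 - R * P := by
      calc _ = 1 - R * P - R * P + R * (P * R) * P := by noncomm_ring
        _ = 1 - R * P - R * P + (R * R) * (P * P) := by rw [cR]; noncomm_ring
        _ = _ := by rw [hRR, hPP]; noncomm_ring
    rw [add_mul, mul_add, mul_add, h1, h2, h3, h4]; noncomm_ring
  · rw [add_mul]
    have h1 : R * V * N * P * (K * P) = 0 := by
      calc _ = R * V * N * (P * K) * P := by noncomm_ring
        _ = R * V * (N * K) * (P * P) := by rw [cK]; noncomm_ring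
        _ = 0 := by rw [hNK]; noncomm_ring
    have h2 : (1 - R * P) * (K * P) = 0 := by
      calc _ = K * P - R * (P * K) * P := by noncomm_ring
        _ = K * P - (R * K) * (P * P) := by rw [cK]; noncomm_ring
        _ = 0 := by rw [hRK, hPP, sub_self]
    rw [h1, h2, add_zero]

end part9

section part10
set_option linter.unusedSectionVars false
open Filter BoundedContinuousFunction
variable {A : Type*} [CStarAlgebra A] [PartialOrder A] [StarOrderedRing A]

lemma inv_bd (E : StarSubalgebra ℂ A) [FiniteDimensional ℂ E] {X Y k : A} (hX : X ∈ E)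
    (h : ‖X * Y - 1‖ ≤ 1/4) : ‖k‖ ≤ 2 * ‖Y‖ * ‖X * k‖ := by
  by_contra hcon
  push Not at hcon
  set gap := ‖k‖ - 2 * ‖Y‖ * ‖X * k‖ with hgap
  have hg : 0 < gap := by linarith
  obtain ⟨t, ht0, ht1, hu⟩ := perturb_unit (finspec E hX)
    (show 0 < min (1 / (4 * (‖Y‖ + 1))) (gap / (2 * (‖Y‖ + 1) * (‖k‖ + 1))) by positivity)
  have t1 : t * (4 * (‖Y‖ + 1)) < 1 := by
    rw [← lt_div_iff₀ (by positivity)]; exact ht1.trans_le (min_le_left _ _)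
  have t2 : t * (2 * (‖Y‖ + 1) * (‖k‖ + 1)) < gap := by
    rw [← lt_div_iff₀ (by positivity)]; exact ht1.trans_le (min_le_right _ _)
  set X' := X + (t:ℂ) • (1:A) with hX'
  have htn : ‖(t:ℂ)‖ = t := by rw [Complex.norm_real, Real.norm_of_nonneg ht0.le]
  have n1 : ‖X' * Y - 1‖ ≤ 1/2 := by
    have : X' * Y - 1 = (X * Y - 1) + (t:ℂ) • Y := by
      rw [hX', add_mul, smul_mul_assoc, one_mul]; abel
    rw [this]
    refine (norm_add_le _ _).trans ?_
    rw [norm_smul, htn]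
    nlinarith [norm_nonneg Y]
  have n2 : ‖X' * k‖ ≤ ‖X * k‖ + t * ‖k‖ := by
    have : X' * k = X * k + (t:ℂ) • k := by rw [hX', add_mul, smul_mul_assoc, one_mul]
    rw [this]
    refine (norm_add_le _ _).trans ?_
    rw [norm_smul, htn]
  have hD : IsUnit (X' * Y) := isUnit_near_one (by linarith)
  obtain ⟨D, hDe⟩ := hD
  obtain ⟨F, hF⟩ := hu
  set v := (↑D⁻¹ : A) * (X' * k) with hv
  have hDv : X' * Y * v = X' * k := by rw [hv, ← hDe, ← mul_assoc, Units.mul_inv, one_mul]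
  have hk : k = Y * v := by
    have : X' * k = X' * (Y * v) := by rw [← mul_assoc, hDv]
    rw [← hF] at this
    exact (Units.mul_right_inj F).1 this
  have hvn : ‖v‖ ≤ 2 * ‖X' * k‖ := by
    have : v = X' * k - (X' * Y - 1) * v := by rw [sub_mul, hDv]; noncomm_ring
    have h2 : ‖v‖ ≤ ‖X' * k‖ + ‖(X' * Y - 1) * v‖ := by
      conv_lhs => rw [this]
      exact norm_sub_le _ _
    have h3 : ‖(X' * Y - 1) * v‖ ≤ 1/2 * ‖v‖ := mul_bd n1 le_rfl
    linarith
  have hkn : ‖k‖ ≤ ‖Y‖ * (2 * (‖X * k‖ + t * ‖k‖)) := by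
    conv_lhs => rw [hk]
    exact mul_bd le_rfl (hvn.trans (by linarith))
  have : ‖Y‖ * (2 * (t * ‖k‖)) ≤ t * (2 * (‖Y‖ + 1) * (‖k‖ + 1)) := by
    nlinarith [norm_nonneg Y, norm_nonneg k, mul_nonneg ht0.le (norm_nonneg Y), mul_nonneg ht0.le (norm_nonneg k)]
  nlinarith

lemma dbd {p x d : A} {δ C : ℝ} (h : ‖p * x * p - d‖ < δ) (hδ : δ ≤ 1) (hp : ‖p‖ ≤ 1) (hx : ‖x‖ ≤ C) :
    ‖d‖ ≤ C + 1 := by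
  have h1 : ‖p * x * p‖ ≤ 1 * C * 1 := mul_bd (mul_bd hp hx) hp
  have h2 := norm_sub_le (p * x * p) (p * x * p - d)
  rw [sub_sub_cancel] at h2
  linarith

lemma sq_bd {x : A} {C : ℝ} (hC : 1 ≤ C) (h : ‖x * star x‖ ≤ C) : ‖x‖ ≤ C := by
  rw [CStarRing.norm_self_mul_star] at h
  nlinarith [norm_nonneg x]

lemma lemF (hs : IsSimpleCStarAlgebra A) (hinf : ¬ FiniteDimensional ℂ A) [Nontrivial A]
    {B : StarSubalgebra ℂ A} (hB : IsClosed (B : Set A))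
    (hl : IsCentrallyLarge B) (hTR : TracialTopRankZeroIn B)
    {r u : A} (hr : r ∈ B) (hrs : star r = r) (hrr : r * r = r) (hr0 : r ≠ 0)
    (hu : star u * u = 1) (hru : r * u = 0) : False := by
  classical
  obtain ⟨k1, hk1, k2, hk2, hk10, hk20, hk1s, hk2s, hk12, hk21, hk1r, hrk1, hk2r, hrk2⟩ :=
    lemNM hs hinf hB hl hr hrs hrr hr0
  obtain ⟨c0, hc0, δ0, hδ0, G0, hG0, hlb⟩ := lower_bd hs hl hk2 hk20
  have hun : ‖u‖ ≤ 1 := isom_norm hu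
  have hrn : ‖r‖ ≤ 1 := proj_norm hrs hrr
  have data : ∀ n : ℕ, ∃ g z c p ω γ ρ ν κ V T : A, ∃ E : StarSubalgebra ℂ A, FiniteDimensional ℂ E ∧
      (γ ∈ E ∧ ρ ∈ E ∧ ν ∈ E ∧ V ∈ E ∧ T ∈ E) ∧
      (star g = g ∧ ‖g‖ ≤ 1 ∧ ‖1 - g‖ ≤ 1 ∧ star p = p ∧ p * p = p ∧ ‖p‖ ≤ 1 ∧ star V * V = 1 ∧ V * star V = 1
        ∧ star T = T ∧ p * V = V * p) ∧
      (‖c‖ ≤ 2 ∧ ‖z * k1‖ ≤ 2 ∧ ‖γ‖ ≤ 2 ∧ ‖ρ‖ ≤ 2 ∧ ‖ν‖ ≤ 3 ∧ ‖κ‖ ≤ ‖k2‖ + 1 ∧ ‖T‖ ≤ 4) ∧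
      c0 ≤ ‖p * k2 * p‖ ∧
      (‖c - u‖ ≤ 1/((n:ℝ)+1) ∧ ‖g * u - u * g‖ ≤ 1/((n:ℝ)+1) ∧
        ‖(z * k1) * star (z * k1) - g‖ ≤ 1/((n:ℝ)+1) ∧
        ‖p * ((1 - g) * c) - ((1 - g) * c) * p‖ ≤ 1/((n:ℝ)+1) ∧ ‖p * g - g * p‖ ≤ 1/((n:ℝ)+1) ∧
        ‖p * r - r * p‖ ≤ 1/((n:ℝ)+1) ∧ ‖p * (z * k1) - (z * k1) * p‖ ≤ 1/((n:ℝ)+1) ∧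
        ‖p * k2 - k2 * p‖ ≤ 1/((n:ℝ)+1)) ∧
      (‖V * T - ω‖ ≤ 1/((n:ℝ)+1) ∧
        ‖p * ((1 - g) * c) * p - ω‖ ≤ 1/((n:ℝ)+1) ∧ ‖p * g * p - γ‖ ≤ 1/((n:ℝ)+1) ∧
        ‖p * r * p - ρ‖ ≤ 1/((n:ℝ)+1) ∧ ‖p * (z * k1) * p - ν‖ ≤ 1/((n:ℝ)+1) ∧
        ‖p * k2 * p - κ‖ ≤ 1/((n:ℝ)+1)) := by
    intro n
    set e := 1/((n:ℝ)+1) with he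
    have he0 : 0 < e := by positivity
    have he1 : e ≤ 1 := by rw [he, div_le_one (by positivity)]; linarith [Nat.cast_nonneg (α := ℝ) n]
    obtain ⟨c, g, hg, z, hz, -, -, hgs, hgn, hgn', hc, hcB, hzg, -, hcm⟩ :=
      large_pack hl 1 (fun _ => u) he0 zero_le_one norm_one hk1 hk10
    have hc' := hc 0
    have hcB' := hcB 0
    have hcm' := hcm 0
    have hzk : (z * k1) * star (z * k1) = z * (k1 * star k1) * star z := by
      rw [star_mul]; noncomm_ring
    rw [← hzk] at hzg
    have hcn : ‖c 0‖ ≤ 2 := by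
      have := norm_add_le (c 0 - u) u
      rw [sub_add_cancel] at this
      linarith
    have hwn : ‖(1 - g) * c 0‖ ≤ 2 := by simpa using mul_bd hgn' hcn
    have hzn : ‖z * k1‖ ≤ 2 := by
      apply sq_bd one_le_two
      have := norm_add_le ((z * k1) * star (z * k1) - g) g
      rw [sub_add_cancel] at this
      linarith
    have hδ : 0 < min e δ0 := lt_min he0 hδ0
    obtain ⟨p, hp, hps, hpp, hp0, E, hfd, hpE, hEB, hEc, hpc, hd, -⟩ := tr_pack hTR hδ
      ({(1 - g) * c 0, g, r, z * k1, k2} ∪ G0)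
      (by intro x hx
          simp only [Finset.coe_union, Finset.coe_insert, Finset.coe_singleton, Set.mem_union,
            Set.mem_insert_iff, Set.mem_singleton_iff] at hx
          rcases hx with (rfl | rfl | rfl | rfl | rfl) | hx
          exacts [hcB', hg, hr, mul_mem hz hk1, hk2, hG0 hx]) (one_mem B) one_ne_zero
    have hpn : ‖p‖ ≤ 1 := proj_norm hps hpp
    have hlb' := hlb p hps hpp hp0 (fun x hx => (hpc x (by simp [hx])).trans_le (min_le_right _ _))
    have me : min e δ0 ≤ e := min_le_left _ _
    have me1 : min e δ0 ≤ 1 := me.trans he1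
    obtain ⟨ω, hωE, -, -, hω, -⟩ := hd ((1 - g) * c 0) (by simp)
    obtain ⟨γ, hγE, -, -, hγ, -⟩ := hd g (by simp)
    obtain ⟨ρ, hρE, -, -, hρ, -⟩ := hd r (by simp)
    obtain ⟨ν, hνE, -, -, hν, -⟩ := hd (z * k1) (by simp)
    obtain ⟨κ, hκE, -, -, hκ, -⟩ := hd k2 (by simp)
    obtain ⟨V, hVE, T, hTE, hV1, hV2, hT, hVT⟩ := polar E hωE he0
    have hωn := dbd hω me1 hpn hwn
    have hTn : ‖T‖ ≤ 4 := by
      have h1 : ‖V * T‖ ≤ 4 := by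
        have := norm_add_le (V * T - ω) ω
        rw [sub_add_cancel] at this
        linarith
      have h2 : T = star V * (V * T) := by rw [← mul_assoc, hV1, one_mul]
      have h3 : ‖star V‖ ≤ 1 := by rw [norm_star]; exact isom_norm hV1
      rw [h2]
      simpa using mul_bd h3 h1
    refine ⟨g, z, c 0, p, ω, γ, ρ, ν, κ, V, T, E, hfd, ⟨hγE, hρE, hνE, hVE, hTE⟩,
      ⟨hgs, hgn, hgn', hps, hpp, hpn, hV1, hV2, (IsSelfAdjoint.of_nonneg hT).star_eq, hEc V hVE⟩,
      ⟨hcn, hzn, ?_, ?_, ?_, dbd hκ me1 hpn le_rfl, hTn⟩, hlb', ⟨hc'.le, hcm'.le, hzg.le, ?_⟩,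
      ⟨hVT.le, (hω.trans_le me).le, (hγ.trans_le me).le, (hρ.trans_le me).le, (hν.trans_le me).le, (hκ.trans_le me).le⟩⟩
    · have := dbd hγ me1 hpn hgn; linarith
    · have := dbd hρ me1 hpn hrn; linarith
    · have := dbd hν me1 hpn hzn; linarith
    · refine ⟨?_, ?_, ?_, ?_, ?_⟩
      all_goals exact ((hpc _ (by simp)).trans_le me).le
  choose g z c p ω γ ρ ν κ V T E hfd hE h1 h2 h3 h4 h5 using data
  have he : Tendsto (fun n : ℕ => 1/((n:ℝ)+1)) atTop (nhds 0) := tendsto_one_div_add_atTop_nhds_zero_nat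
  choose hγE hρE hνE hVE hTE using hE
  choose hgs hgn hgn' hps hpp hpn hV1 hV2 hTs hpV using h1
  choose hcn hzn hγn hρn hνn hκn hTn using h2
  choose a1 a2 a3 a4 a5 a6 a7 a8 using h4
  choose b1 b2 b3 b4 b5 b6 using h5
  have hVn : ∀ n, ‖V n‖ ≤ 1 := fun n => isom_norm (hV1 n)
  have hVn' : ∀ n, ‖star (V n)‖ ≤ 1 := fun n => by rw [norm_star]; exact hVn n
  have hwn : ∀ n, ‖(1 - g n) * c n‖ ≤ 2 := fun n => by simpa using mul_bd (hgn' n) (hcn n)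
  let G' := bs g ⟨1, hgn⟩
  let P' := bs p ⟨1, hpn⟩
  let W' := bs (fun n => (1 - g n) * c n) ⟨2, hwn⟩
  let Ws' := bs (fun n => star ((1 - g n) * c n)) ⟨2, fun n => by rw [norm_star]; exact hwn n⟩
  let N' := bs (fun n => z n * k1) ⟨2, hzn⟩
  let Ns' := bs (fun n => star (z n * k1)) ⟨2, fun n => by rw [norm_star]; exact hzn n⟩
  let V' := bs V ⟨1, hVn⟩
  let Vs' := bs (fun n => star (V n)) ⟨1, hVn'⟩
  let T' := bs T ⟨4, hTn⟩
  let γ' := bs γ ⟨2, hγn⟩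
  let ρ' := bs ρ ⟨2, hρn⟩
  let ν' := bs ν ⟨3, hνn⟩
  let νs' := bs (fun n => star (ν n)) ⟨3, fun n => by rw [norm_star]; exact hνn n⟩
  let κ' := bs κ ⟨_, hκn⟩
  let U' := bs (fun _ => u) ⟨1, fun _ => hun⟩
  let Us' := bs (fun _ => star u) ⟨1, fun _ => by rw [norm_star]; exact hun⟩
  let R' := bs (fun _ => r) ⟨1, fun _ => hrn⟩
  let K' := bs (fun _ => k2) ⟨_, fun _ => le_rfl⟩
  have comm_star : ∀ (x : A) n e, ‖p n * x - x * p n‖ ≤ e → ‖p n * star x - star x * p n‖ ≤ e := by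
    intro x n e h
    rw [norm_sub_rev]
    rw [← norm_star, star_sub, star_mul, star_mul, hps n] at h
    exact h
  have cW : qm P' * qm W' = qm W' * qm P' := by
    rw [← map_mul, ← map_mul]; exact qm_of_le he a4
  have cWs : qm P' * qm Ws' = qm Ws' * qm P' := by
    rw [← map_mul, ← map_mul]; exact qm_of_le he (fun n => comm_star _ _ _ (a4 n))
  have cG : qm P' * qm G' = qm G' * qm P' := by
    rw [← map_mul, ← map_mul]; exact qm_of_le he a5
  have cR : qm P' * qm R' = qm R' * qm P' := by
    rw [← map_mul, ← map_mul]; exact qm_of_le he a6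
  have cN : qm P' * qm N' = qm N' * qm P' := by
    rw [← map_mul, ← map_mul]; exact qm_of_le he a7
  have cNs : qm P' * qm Ns' = qm Ns' * qm P' := by
    rw [← map_mul, ← map_mul]; exact qm_of_le he (fun n => comm_star _ _ _ (a7 n))
  have cK : qm P' * qm K' = qm K' * qm P' := by
    rw [← map_mul, ← map_mul]; exact qm_of_le he a8
  have cV : qm P' * qm V' = qm V' * qm P' := by
    rw [← map_mul, ← map_mul]; exact qm_of_eq hpV
  have cVs : qm P' * qm Vs' = qm Vs' * qm P' := by
    rw [← map_mul, ← map_mul]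
    refine qm_of_eq (fun n => ?_)
    have := congrArg star (hpV n)
    rw [star_mul, star_mul, hps n] at this
    exact this.symm
  have hPP : qm P' * qm P' = qm P' := by
    rw [← map_mul]; exact qm_of_eq hpp
  have hW : qm W' = (1 - qm G') * qm U' := by
    rw [← map_one qm, ← map_sub, ← map_mul]
    refine qm_of_le he (fun n => ?_)
    show ‖(1 - g n) * c n - (1 - g n) * u‖ ≤ _
    rw [← mul_sub]
    simpa using mul_bd (hgn' n) (a1 n)
  have hWs : qm Ws' = qm Us' * (1 - qm G') := by
    rw [← map_one qm, ← map_sub, ← map_mul]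
    refine qm_of_le he (fun n => ?_)
    show ‖star ((1 - g n) * c n) - star u * (1 - g n)‖ ≤ _
    have : star ((1 - g n) * c n) - star u * (1 - g n) = star ((1 - g n) * (c n - u)) := by
      rw [star_mul, star_mul, star_sub, star_sub, star_one, hgs n]; noncomm_ring
    rw [this, norm_star]
    simpa using mul_bd (hgn' n) (a1 n)
  have hGU : qm G' * qm U' = qm U' * qm G' := by
    rw [← map_mul, ← map_mul]; exact qm_of_le he a2
  have hU : qm Us' * qm U' = 1 := by
    rw [← map_mul, ← map_one qm]; exact qm_of_eq (fun _ => hu)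
  have hRU : qm R' * qm U' = 0 := by
    rw [← map_mul, ← map_zero qm]; exact qm_of_eq (fun _ => hru)
  have hN : qm N' * qm Ns' = qm G' := by
    rw [← map_mul]; exact qm_of_le he a3
  have hNR : qm N' * qm R' = qm N' := by
    rw [← map_mul]; exact qm_of_eq (fun n => by
      show z n * k1 * r = z n * k1
      rw [mul_assoc, hk1r])
  have hRN : qm R' * qm Ns' = qm Ns' := by
    rw [← map_mul]; exact qm_of_eq (fun n => by
      show r * star (z n * k1) = star (z n * k1)
      rw [star_mul, hk1s, ← mul_assoc, hrk1])
  have hNK : qm N' * qm K' = 0 := by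
    rw [← map_mul, ← map_zero qm]; exact qm_of_eq (fun n => by
      show z n * k1 * k2 = 0
      rw [mul_assoc, hk12, mul_zero])
  have hRK : qm R' * qm K' = qm K' := by
    rw [← map_mul]; exact qm_of_eq (fun _ => hrk2)
  have hRR : qm R' * qm R' = qm R' := by
    rw [← map_mul]; exact qm_of_eq (fun _ => hrr)
  have hV2' : qm V' * qm Vs' = 1 := by
    rw [← map_mul, ← map_one qm]; exact qm_of_eq hV2
  have hV1' : qm Vs' * qm V' = 1 := by
    rw [← map_mul, ← map_one qm]; exact qm_of_eq hV1
  have he2 : Tendsto (fun n : ℕ => 1/((n:ℝ)+1) + 1/((n:ℝ)+1)) atTop (nhds 0) := by simpa using he.add he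
  have hVTn : ∀ n, ‖V n * T n - p n * ((1 - g n) * c n) * p n‖ ≤ 1/((n:ℝ)+1) + 1/((n:ℝ)+1) := by
    intro n
    calc _ = ‖(V n * T n - ω n) - (p n * ((1 - g n) * c n) * p n - ω n)‖ := by congr 1; abel
      _ ≤ _ := norm_sub_le _ _
      _ ≤ _ := add_le_add (b1 n) (b2 n)
  have hVT : qm V' * qm T' = qm P' * qm W' * qm P' := by
    rw [← map_mul, ← map_mul, ← map_mul]
    exact qm_of_le he2 hVTn
  have hTV : qm T' * qm Vs' = qm P' * qm Ws' * qm P' := by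
    rw [← map_mul, ← map_mul, ← map_mul]
    refine qm_of_le he2 (fun n => ?_)
    have := hVTn n
    rw [← norm_star] at this
    show ‖T n * star (V n) - p n * star ((1 - g n) * c n) * p n‖ ≤ _
    generalize (1 - g n) * c n = w at this
    simpa only [star_sub, star_mul, hTs n, hps n, mul_assoc] using this
  have hρ : qm P' * qm R' * qm P' = qm ρ' := by
    rw [← map_mul, ← map_mul]; exact qm_of_le he b4
  have hγ : qm P' * qm G' * qm P' = qm γ' := by
    rw [← map_mul, ← map_mul]; exact qm_of_le he b3
  have hν : qm P' * qm N' * qm P' = qm ν' := by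
    rw [← map_mul, ← map_mul]; exact qm_of_le he b5
  have hνs : qm P' * qm Ns' * qm P' = qm νs' := by
    rw [← map_mul, ← map_mul]
    refine qm_of_le he (fun n => ?_)
    have := b5 n
    rw [← norm_star] at this
    show ‖p n * star (z n * k1) * p n - star (ν n)‖ ≤ _
    simpa only [star_mul, star_sub, hps n, mul_assoc] using this
  have hκ : qm P' * qm K' * qm P' = qm κ' := by
    rw [← map_mul, ← map_mul]; exact qm_of_le he b6
  obtain ⟨hXY, hXK⟩ := F_alg hPP cW cWs cG cR cN cNs cK cV cVs hW hWs hGU hU hRU hN hNR hRN hNK hRK hV2' hV1' hRR hVT hTV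
  rw [hρ, hν, hνs, hγ] at hXY
  rw [hρ, hν, hκ] at hXK
  rw [← map_one qm, ← map_ofNat qm 2, ← map_sub, ← map_sub, ← map_mul, ← map_mul, ← map_mul, ← map_mul, ← map_mul,
    ← map_add, ← map_add, ← map_mul] at hXY
  rw [← map_one qm, ← map_sub, ← map_mul, ← map_mul, ← map_add, ← map_mul, ← map_zero qm] at hXK
  set X' := ρ' * V' * ν' + (1 - ρ') with hX'
  set Y' := νs' * (OfNat.ofNat 2 - γ') * Vs' * ρ' + (1 - ρ') with hY'
  have ev1 := qm_ev hXY (show (0:ℝ) < 1/4 by norm_num)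
  have ev2 := qm_ev hXK (show (0:ℝ) < c0 / (8 * (‖Y'‖ + 1)) by positivity)
  have ev3 : ∀ᶠ n : ℕ in atTop, 1/((n:ℝ)+1) < c0 / 4 := he.eventually (gt_mem_nhds (by positivity))
  obtain ⟨n, hn1, hn2, hn3⟩ := (ev1.and (ev2.and ev3)).exists
  have hn1' : ‖X' n * Y' n - 1‖ < 1/4 := hn1
  have hn2' : ‖X' n * κ n‖ < c0 / (8 * (‖Y'‖ + 1)) := by
    have : ‖X' n * κ n - 0‖ < c0 / (8 * (‖Y'‖ + 1)) := hn2
    rwa [sub_zero] at this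
  have hXE : X' n ∈ E n := by
    show ρ n * V n * ν n + (1 - ρ n) ∈ E n
    exact add_mem (mul_mem (mul_mem (hρE n) (hVE n)) (hνE n)) (sub_mem (one_mem _) (hρE n))
  have := hfd n
  have hκb := inv_bd (E n) (k := κ n) hXE hn1'.le
  have hYn : ‖Y' n‖ ≤ ‖Y'‖ := Y'.norm_coe_le_norm n
  rw [lt_div_iff₀ (by positivity)] at hn2'
  have f1 : ‖κ n‖ ≤ c0 / 4 := by
    have : 2 * ‖Y' n‖ * ‖X' n * κ n‖ ≤ 2 * ‖Y'‖ * ‖X' n * κ n‖ := by gcongr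
    nlinarith [norm_nonneg (X' n * κ n)]
  have f2 := norm_add_le (p n * k2 * p n - κ n) (κ n)
  rw [sub_add_cancel] at f2
  have := h3 n
  have := b6 n
  linarith

end part10

section part11
set_option linter.unusedSectionVars false
variable {A : Type*} [CStarAlgebra A] [PartialOrder A] [StarOrderedRing A]

lemma almost_proj_total {h : A} (hs : IsSelfAdjoint h) (hn : ‖h‖ ≤ 2) :
    ∃ P, star P = P ∧ P * P = P ∧ ‖P - h‖ ≤ 8 * ‖h * h - h‖ ∧ (∃ m, P = m * h ∧ P = h * m) ∧
      (∀ E : StarSubalgebra ℂ A, IsClosed (E : Set A) → h ∈ E → P ∈ E) := by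
  by_cases hc : ‖h * h - h‖ < 1/4
  · obtain ⟨P, h1, h2, h3, h4, h5⟩ := almost_proj hs hc le_rfl
    exact ⟨P, h1, h2, h3.trans (by linarith [norm_nonneg (h * h - h)]), h4, h5⟩
  · refine ⟨0, by simp, by simp, ?_, ⟨0, by simp, by simp⟩, fun E _ _ => zero_mem E⟩
    push Not at hc
    rw [zero_sub, norm_neg]
    linarith

lemma rho_bd {p r ρ : A} {δ : ℝ} (hp : ‖p‖ ≤ 1) (hr : ‖r‖ ≤ 1) (hpp : p * p = p) (hrr : r * r = r)
    (hρ : ‖ρ‖ ≤ 2) (h : ‖p * r - r * p‖ ≤ δ) (h' : ‖p * r * p - ρ‖ ≤ δ) : ‖ρ * ρ - ρ‖ ≤ 5 * δ := by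
  set x := p * r * p with hx
  have hxn : ‖x‖ ≤ 1 := by simpa using mul_bd (mul_bd hp hr) hp
  have e1 : x * x - x = - (p * (p * r - r * p) * r * p) := by
    have h1 : x * x = p * (r * p) * (r * p) := by rw [hx]; simp only [mul_assoc]; rw [← mul_assoc p p, hpp]
    have h2 : x = p * (p * r) * (r * p) := by
      rw [hx]; simp only [mul_assoc]; rw [← mul_assoc p p, hpp, ← mul_assoc r r, hrr]
    conv_lhs => rw [h1]
    conv_lhs => enter [2]; rw [h2]
    noncomm_ring
  have e2 : ρ * ρ - ρ = (x * x - x) + (x - ρ) - (ρ * (x - ρ) + (x - ρ) * x) := by noncomm_ring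
  have n1 : ‖x * x - x‖ ≤ 1 * δ * 1 * 1 := by
    rw [e1, norm_neg]; exact mul_bd (mul_bd (mul_bd hp h) hr) hp
  have n2 : ‖ρ * (x - ρ)‖ ≤ 2 * δ := mul_bd hρ h'
  have n3 : ‖(x - ρ) * x‖ ≤ δ * 1 := mul_bd h' hxn
  rw [e2]
  have := norm_sub_le ((x * x - x) + (x - ρ)) (ρ * (x - ρ) + (x - ρ) * x)
  have := norm_add_le (x * x - x) (x - ρ)
  have := norm_add_le (ρ * (x - ρ)) ((x - ρ) * x)
  linarith

lemma ml_data 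
    {B : StarSubalgebra ℂ A} [Nontrivial A]
    (hl : IsCentrallyLarge B) (hTR : TracialTopRankZeroIn B)
    {a r k1 k2 : A} (hr : r ∈ B) (hrs : star r = r) (hrr : r * r = r)
    (hk1 : k1 ∈ B) (hk2 : k2 ∈ B) (hk10 : k1 ≠ 0) (hk20 : k2 ≠ 0) (hk1s : star k1 = k1) (hk2s : star k2 = k2)
    (hk12 : k1 * k2 = 0) (hk21 : k2 * k1 = 0) (hk1r : k1 * r = k1) (hk2r : k2 * r = k2)
    {e : ℝ} (he0 : 0 < e) (he1 : e ≤ 1) :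
    ∃ g c p R f T d S : A, ∃ E : StarSubalgebra ℂ A, FiniteDimensional ℂ E ∧
      (d ∈ E ∧ p - R - f ∈ E) ∧
      (star g = g ∧ ‖g‖ ≤ 1 ∧ ‖1 - g‖ ≤ 1 ∧ ‖c‖ ≤ ‖a‖ + 1 ∧ ‖T‖ ≤ 2 ∧ ‖S‖ ≤ 5 ∧ S * r = S) ∧
      (star p = p ∧ p * p = p ∧ star R = R ∧ R * R = R ∧ p * R = R ∧ R * p = R) ∧
      (star f = f ∧ f * f = f ∧ p * f = f ∧ f * p = f ∧ R * f = 0 ∧ f * R = 0) ∧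
      (star T = T ∧ (p - R - f) * d * (p - R - f) = d) ∧
      (‖c - a‖ ≤ e ∧ ‖g * a - a * g‖ ≤ e ∧ ‖g * r - r * g‖ ≤ e ∧
        ‖p * ((1 - r) * g * (1 - r)) - ((1 - r) * g * (1 - r)) * p‖ ≤ e ∧
        ‖p * r - r * p‖ ≤ e ∧ ‖R - p * r * p‖ ≤ 41 * e) ∧
      (‖T - (p - R) * ((1 - r) * g * (1 - r)) * (p - R)‖ ≤ e ∧ ‖(p - R - f) * T‖ ≤ e ∧
        ‖S * star S - ((1 - p) + f)‖ ≤ 3 * e ∧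
        ‖d - (p - R - f) * ((1 - g) * c) * (p - R - f)‖ ≤ e) := by
  classical
  have hee : 0 < e * e := mul_pos he0 he0
  have hee1 : e * e ≤ e := by nlinarith
  have hrn : ‖r‖ ≤ 1 := proj_norm hrs hrr
  have hr1s : star (1 - r) = 1 - r := by rw [star_sub, star_one, hrs]
  have hr1r : (1 - r) * (1 - r) = 1 - r := by noncomm_ring; rw [hrr]; abel
  have hr1n : ‖1 - r‖ ≤ 1 := proj_norm hr1s hr1r
  obtain ⟨c, g, hg, z, hz, hg0, -, hgs, hgn, hgn', hc, hcB, hzg, -, hcm⟩ :=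
      large_pack hl 2 ![a, r] hee zero_le_one norm_one hk2 hk20
  have hc0 := hc 0
  have hcB0 := hcB 0
  have hcm0 := hcm 0
  have hcm1 := hcm 1
  simp only [Matrix.cons_val_zero, Matrix.cons_val_one] at hc0 hcm0 hcm1
  set w := (1 - g) * c 0 with hw
  set g' := (1 - r) * g * (1 - r) with hg'
  have hg'n : ‖g'‖ ≤ 1 := by simpa using mul_bd (mul_bd hr1n hgn) hr1n
  have hg's : star g' = g' := by rw [hg', star_mul, star_mul, hr1s, hgs, mul_assoc]
  have hg'0 : 0 ≤ g' := by
    have := star_right_conjugate_nonneg hg0 (1 - r)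
    rwa [hr1s] at this
  have hg'B : g' ∈ B := mul_mem (mul_mem (sub_mem (one_mem _) hr) hg) (sub_mem (one_mem _) hr)
  obtain ⟨p, hp, hps, hpp, hp0, E, hfd, hpE, hEB, hEc, hpc, hd, s1, hs1, hs1p⟩ := tr_pack hTR hee
      {g', r, w}
      (by intro x hx
          simp only [Finset.coe_insert, Finset.coe_singleton, 
            Set.mem_insert_iff, Set.mem_singleton_iff] at hx
          rcases hx with rfl | rfl | rfl 
          exacts [hg'B, hr, hcB0]) hk1 hk10
  have hpn : ‖p‖ ≤ 1 := proj_norm hps hpp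
  obtain ⟨γ, hγE, -, -, hγ, hγs⟩ := hd g' (by simp)
  obtain ⟨ρ, hρE, hpρ, hρp, hρ, hρs⟩ := hd r (by simp)
  obtain ⟨ω, hωE, -, -, hω, -⟩ := hd w (by simp)
  have hEcl := closed_fd E
  have hρn : ‖ρ‖ ≤ 2 := by have := dbd hρ (hee1.trans he1) hpn hrn; linarith
  obtain ⟨R, hRs, hRR, hRρ, ⟨m, hRm, hRm'⟩, hRE⟩ := almost_proj_total (hρs hrs) hρn
  have hRE := hRE E hEcl hρE
  have hpR : p * R = R := by rw [hRm', ← mul_assoc, hpρ]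
  have hRp : R * p = R := by rw [hRm, mul_assoc, hρp]
  have hρρ := rho_bd hpn hrn hpp hrr hρn (hpc r (by simp)).le hρ.le
  set P := p - R with hP
  have hPs : star P = P := by rw [hP, star_sub, hps, hRs]
  have hPP : P * P = P := by rw [hP, sub_mul, mul_sub, mul_sub, hpp, hpR, hRp, hRR]; abel
  have hpP : p * P = P := by rw [hP, mul_sub, hpp, hpR]
  have hPp : P * p = P := by rw [hP, sub_mul, hpp, hRp]
  have hPE : P ∈ E := sub_mem hpE hRE
  have hPR : P * R = 0 := by rw [hP, sub_mul, hpR, hRR, sub_self]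
  have hRP : R * P = 0 := by rw [hP, mul_sub, hRp, hRR, sub_self]
  clear_value P
  have hPn : ‖P‖ ≤ 1 := proj_norm hPs hPP
  set T := P * γ * P with hT
  have hTE : T ∈ E := mul_mem (mul_mem hPE hγE) hPE
  have hTs : star T = T := by rw [hT, star_mul, star_mul, hPs, hγs hg's, mul_assoc]
  set k := P * g' * P with hk
  have hk0 : 0 ≤ k := by
    have := star_right_conjugate_nonneg hg'0 P
    rwa [hPs] at this
  have hTk : ‖T - k‖ ≤ e * e := by
    have : T - k = P * (γ - p * g' * p) * P := by
      have : P * (p * g' * p) * P = k := by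
        rw [hk]
        calc _ = (P * p) * g' * (p * P) := by noncomm_ring
          _ = _ := by rw [hPp, hpP]
      rw [mul_sub, sub_mul, this]
    rw [this]
    have h1 : ‖γ - p * g' * p‖ ≤ e * e := by rw [norm_sub_rev]; exact hγ.le
    simpa using mul_bd (mul_bd hPn h1) hPn
  have hkn : ‖k‖ ≤ 1 := by simpa using mul_bd (mul_bd hPn hg'n) hPn
  have hTn : ‖T‖ ≤ 2 := by
    have := norm_add_le (T - k) k
    rw [sub_add_cancel] at this
    linarith
  obtain ⟨f, hfE, κ0, hκ0E, hfs, hff, hκ0s, hf1, hf2, hf3, hκ0n, hfT⟩ :=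
    specproj E hTE hTs hk0 he0 (hTk.trans hee1)
  have hTP : T * P = T := by rw [hT, mul_assoc, hPP]
  have hPT : P * T = T := by rw [hT, ← mul_assoc, ← mul_assoc, hPP]
  have hfP : f * P = f := by rw [hf2, mul_assoc, hTP]
  have hPf : P * f = f := by rw [hf3, ← mul_assoc, hPT]
  have hcom : κ0 * f = f * κ0 := by
    calc κ0 * f = κ0 * (κ0 * T * κ0) := by rw [← hf1]
      _ = (κ0 * κ0 * T) * κ0 := by noncomm_ring
      _ = _ := by rw [← hf2]
  obtain ⟨κ, hκ⟩ : ∃ κ, κ = κ0 * f := ⟨_, rfl⟩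
  have hκs : star κ = κ := by rw [hκ, star_mul, hfs, hκ0s, hcom]
  have hκP : κ * P = κ := by rw [hκ, mul_assoc, hfP]
  have hPκ : P * κ = κ := by rw [hκ, hcom, ← mul_assoc, hPf]
  have hκT : κ * T * κ = f := by
    calc κ * T * κ = f * (κ0 * T * κ0) * f := by rw [hκ]; nth_rewrite 1 [hcom]; simp only [mul_assoc]
      _ = f := by rw [← hf1, hff, hff]
  have hκn : ‖κ‖ * ‖κ‖ ≤ e⁻¹ := by
    have h1 : ‖κ‖ ≤ ‖κ0‖ * 1 := by
      rw [hκ]; exact mul_bd le_rfl (proj_norm hfs hff)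
    rw [mul_one] at h1
    exact (mul_self_le_mul_self (norm_nonneg _) h1).trans hκ0n
  have κbd : ∀ x : A, ‖x‖ ≤ e * e → ‖κ * x * κ‖ ≤ e := by
    intro x hx
    have h1 : ‖κ * x * κ‖ ≤ ‖κ‖ * (e * e) * ‖κ‖ := mul_bd (mul_bd le_rfl hx) le_rfl
    have h2 : ‖κ‖ * (e * e) * ‖κ‖ = (‖κ‖ * ‖κ‖) * (e * e) := by ring
    have h3 : (‖κ‖ * ‖κ‖) * (e * e) ≤ e⁻¹ * (e * e) := by gcongr
    have h4 : e⁻¹ * (e * e) = e := by field_simp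
    linarith
  set M := κ * (1 - r) * z * k2 with hM
  set S1 := s1 * k1 with hS1
  have hpf : p * f = f := by rw [← hPf, ← mul_assoc, hpP]
  have hfp : f * p = f := by rw [← hfP, mul_assoc, hPp]
  have hfR : f * R = 0 := by rw [← hfP, mul_assoc, hPR, mul_zero]
  have hRf : R * f = 0 := by rw [← hPf, ← mul_assoc, hRP, zero_mul]
  have hMM : ‖M * star M - f‖ ≤ 2 * e := by
    have e1 : M * star M = κ * ((1 - r) * (z * (k2 * star k2) * star z) * (1 - r)) * κ := by
      rw [hM]; simp only [star_mul, hκs, hr1s]; noncomm_ring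
    have e2 : M * star M - f = κ * ((1 - r) * (z * (k2 * star k2) * star z - g) * (1 - r)) * κ
        - κ * (T - k) * κ := by
      have h1 : κ * k * κ = κ * g' * κ := by
        calc κ * k * κ = (κ * P) * g' * (P * κ) := by rw [hk]; noncomm_ring
          _ = _ := by rw [hκP, hPκ]
      have h2 : κ * (T - k) * κ = f - κ * g' * κ := by rw [mul_sub, sub_mul, hκT, h1]
      rw [h2, e1, hg']
      noncomm_ring
    rw [e2]
    refine (norm_sub_le _ _).trans ?_
    have b1 := κbd _ hTk
    have b2 := κbd _ (show ‖(1 - r) * (z * (k2 * star k2) * star z - g) * (1 - r)‖ ≤ e * e by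
      simpa using mul_bd (mul_bd hr1n hzg.le) hr1n)
    linarith
  have hSS : ‖(S1 + M) * star (S1 + M) - ((1 - p) + f)‖ ≤ 3 * e := by
    have x1 : S1 * star M = 0 := by
      rw [hS1, hM]; simp only [star_mul, hk2s]
      calc _ = s1 * (k1 * k2) * (star z * (star (1 - r) * star κ)) := by simp only [mul_assoc]
        _ = 0 := by rw [hk12]; simp
    have x2 : M * star S1 = 0 := by
      have := congrArg star x1
      rwa [star_mul, star_star, star_zero] at this
    have x3 : S1 * star S1 = s1 * (k1 * star k1) * star s1 := by
      rw [hS1, star_mul]; noncomm_ring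
    have : (S1 + M) * star (S1 + M) - ((1 - p) + f) = (s1 * (k1 * star k1) * star s1 - (1 - p)) + (M * star M - f) := by
      rw [star_add, add_mul, mul_add, mul_add, x1, x2, x3]; abel
    rw [this]
    refine (norm_add_le _ _).trans ?_
    linarith
  have hf1n : ‖f‖ ≤ 1 := proj_norm hfs hff
  have hp1n : ‖1 - p‖ ≤ 1 := proj_norm (by rw [star_sub, star_one, hps]) (by noncomm_ring; rw [hpp]; abel)
  have hSn : ‖S1 + M‖ ≤ 5 := by
    apply sq_bd (by norm_num)
    have h1 := norm_add_le ((S1 + M) * star (S1 + M) - ((1 - p) + f)) ((1 - p) + f)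
    rw [sub_add_cancel] at h1
    have h2 := norm_add_le (1 - p) f
    linarith
  have hSr : (S1 + M) * r = S1 + M := by
    rw [add_mul, hS1, hM, mul_assoc, hk1r, mul_assoc _ k2 r, hk2r]
  set q := P - f with hq
  have hqE : q ∈ E := sub_mem hPE hfE
  have hqs : star q = q := by rw [hq, star_sub, hPs, hfs]
  have hqq : q * q = q := by rw [hq, sub_mul, mul_sub, mul_sub, hPP, hPf, hfP, hff]; abel
  have hqn : ‖q‖ ≤ 1 := proj_norm hqs hqq
  have hqp : q * p = q := by rw [hq, sub_mul, hPp, hfp]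
  have hpq : p * q = q := by rw [hq, mul_sub, hpP, hpf]
  clear_value q
  refine ⟨g, c 0, p, R, f, T, q * ω * q, S1 + M, E, hfd, ?_⟩
  rw [← hP, ← hq, ← hg', ← hw, ← hk]
  refine ⟨⟨mul_mem (mul_mem hqE hωE) hqE, hqE⟩,
    ⟨hgs, hgn, hgn', ?_, hTn, hSn, hSr⟩, ⟨hps, hpp, hRs, hRR, hpR, hRp⟩, ⟨hfs, hff, hpf, hfp, hRf, hfR⟩,
    ⟨hTs, ?_⟩, ⟨hc0.le.trans hee1, hcm0.le.trans hee1, hcm1.le.trans hee1, (hpc g' (by simp)).le.trans hee1,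
      (hpc r (by simp)).le.trans hee1, ?_⟩, ⟨hTk.trans hee1, ?_, hSS, ?_⟩⟩
  · have := norm_add_le (c 0 - a) a
    rw [sub_add_cancel] at this
    linarith
  · calc q * (q * ω * q) * q = (q * q) * ω * (q * q) := by noncomm_ring
      _ = _ := by rw [hqq]
  · have h1 : R - p * r * p = (R - ρ) - (p * r * p - ρ) := by abel
    rw [h1]
    refine (norm_sub_le _ _).trans ?_
    linarith
  · rw [hq, sub_mul, hPT]; exact hfT
  · have h1 : q * ω * q - q * w * q = - (q * (p * w * p - ω) * q) := by
      have : q * (p * w * p) * q = q * w * q := by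
        calc _ = (q * p) * w * (p * q) := by noncomm_ring
          _ = _ := by rw [hqp, hpq]
      rw [mul_sub, sub_mul, this]; abel
    rw [h1, norm_neg]
    have : ‖q * (p * w * p - ω) * q‖ ≤ 1 * (e * e) * 1 := mul_bd (mul_bd hqn hω.le) hqn
    linarith

end part11

section part12
set_option linter.unusedSectionVars false
set_option linter.unusedVariables false
open Filter BoundedContinuousFunction

lemma ml_alg {Q : Type*} [Ring Q] {a r g g' p R f T w d q : Q} (hq : q = p - R - f)
    (hgr : g * r = r * g) (hg' : g' = (1 - r) * g * (1 - r)) (hpg : p * g' = g' * p) (hpr : p * r = r * p)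
    (hR : R = p * r * p) (hT : T = (p - R) * g' * (p - R)) (hqT : q * T = 0) (hpp : p * p = p) (hpR : p * R = R)
    (hRp : R * p = R) (hRR : R * R = R) (hpf : p * f = f) (hfp : f * p = f) (hRf : R * f = 0) (hfR : f * R = 0)
    (hff : f * f = f) (hrr : r * r = r) (hw : w = (1 - g) * a) (hd : d = q * w * q) :
    q * r = 0 ∧ r * q = 0 ∧ d = q * a * q ∧ (1 - q - r) * ((1 - p) + f) * (1 - q - r) = 1 - q - r := by
  have hqp : q * p = q := by rw [hq, sub_mul, sub_mul, hpp, hRp, hfp]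
  have hpq : p * q = q := by rw [hq, mul_sub, mul_sub, hpp, hpR, hpf]
  have hqR : q * R = 0 := by rw [hq, sub_mul, sub_mul, hpR, hRR, hfR]; abel
  have hRq : R * q = 0 := by rw [hq, mul_sub, mul_sub, hRp, hRR, hRf]; abel
  have hqq : q * q = q := by nth_rewrite 2 [hq]; rw [mul_sub, mul_sub, hqp, hqR, hq, sub_mul, sub_mul, hpf, hRf, hff]; abel
  have hqr : q * r = 0 := by
    have : q * r * p = 0 := by rw [← hqp, ← hqR, hR]; simp only [mul_assoc]
    calc q * r = q * p * r := by rw [hqp]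
      _ = q * r * p := by rw [mul_assoc, hpr, mul_assoc]
      _ = 0 := this
  have hrq : r * q = 0 := by
    calc r * q = r * p * q := by rw [mul_assoc, hpq]
      _ = p * r * p * q := by rw [← hpr, mul_assoc (p * r), hpq]
      _ = 0 := by rw [← hR, hRq]
  have hg'r : g' * r = 0 := by rw [hg', mul_assoc, sub_mul 1 r r, one_mul, hrr, sub_self, mul_zero]
  have hg'R : g' * R = 0 := by rw [hR, ← mul_assoc, ← mul_assoc, ← hpg, mul_assoc p, hg'r]; simp
  have hqg' : q * g' = 0 := by
    have : q * T = q * g' := by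
      have e1 : q * (p - R) = q := by rw [mul_sub, hqp, hqR, sub_zero]
      have e2 : g' * (p - R) = p * g' := by rw [mul_sub, hg'R, sub_zero, hpg]
      rw [hT, ← mul_assoc, ← mul_assoc, e1, mul_assoc, e2, ← mul_assoc, hqp]
    rw [← this, hqT]
  have hgg : g = g' + r * g := by
    rw [hg', mul_sub, mul_one, sub_mul 1 r g, one_mul, sub_mul, mul_assoc r, hgr, ← mul_assoc, hrr]; abel
  have hqg : q * g = 0 := by rw [hgg, mul_add, hqg', ← mul_assoc, hqr]; simp
  refine ⟨hqr, hrq, ?_, ?_⟩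
  · rw [hd, hw, ← mul_assoc, mul_sub, hqg, mul_one, sub_zero]
  · have h1 : (1 - p) + f = 1 - q - R := by rw [hq]; abel
    have hsR : (1 - q - r) * R = 0 := by
      have : r * R = R := by rw [hR, ← mul_assoc, ← mul_assoc, ← hpr, mul_assoc p, hrr]
      rw [sub_mul, sub_mul, hqR, this]; simp
    rw [h1]
    have h2 : (1 - q - r) * (1 - q - R) = 1 - q - r := by
      rw [mul_sub, hsR, sub_zero, mul_sub, mul_one, sub_mul, sub_mul, one_mul, hqq, hrq]; abel
    have h3 : (1 - q - r) * (1 - q - r) = 1 - q - r := by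
      simp only [mul_sub, sub_mul, one_mul, mul_one, hqq, hrq, hqr, hrr]; abel
    rw [h2, h3]

variable {A : Type*} [CStarAlgebra A] [PartialOrder A] [StarOrderedRing A]

lemma ml_seq (hs : IsSimpleCStarAlgebra A) (hinf : ¬ FiniteDimensional ℂ A) [Nontrivial A]
    {B : StarSubalgebra ℂ A} (hB : IsClosed (B : Set A))
    (hl : IsCentrallyLarge B) (hTR : TracialTopRankZeroIn B)
    {a r : A} (hr : r ∈ B) (hrs : star r = r) (hrr : r * r = r) (hr0 : r ≠ 0)
    (hra : r * a = 0) (har : a * r = 0) {η : ℝ} (hη : 0 < η) :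
    ∃ q t S d : A, ∃ E : StarSubalgebra ℂ A, FiniteDimensional ℂ E ∧ (q ∈ E ∧ d ∈ E) ∧
      (star q = q ∧ q * q = q ∧ star t = t ∧ t * t = t ∧ q * t = 0 ∧ t * q = 0) ∧ q * d * q = d ∧ ‖S‖ ≤ 5 ∧
      ‖d - q * a * q‖ < η ∧ ‖t * a‖ < η ∧ ‖a * t‖ < η ∧
      ‖((1 - q - t) * S * t) * star ((1 - q - t) * S * t) - (1 - q - t)‖ < η := by
  classical
  obtain ⟨k1, hk1, k2, hk2, hk10, hk20, hk1s, hk2s, hk12, hk21, hk1r, hrk1, hk2r, hrk2⟩ :=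
    lemNM hs hinf hB hl hr hrs hrr hr0
  have hrn : ‖r‖ ≤ 1 := proj_norm hrs hrr
  have data := fun n : ℕ => ml_data (a := a) hl hTR hr hrs hrr hk1 hk2 hk10 hk20 hk1s hk2s hk12 hk21 hk1r hk2r
    (e := 1/((n:ℝ)+1)) (by positivity)
    (by rw [div_le_one (by positivity)]; linarith [Nat.cast_nonneg (α := ℝ) n])
  choose g c p R f T d S E hfd h1 h2 h3 h4 h5 h6 h7 using data
  choose hdE hqE using h1
  choose hgs hgn hgn' hcn hTn hSn hSr using h2
  choose hps hpp hRs hRR hpR hRp using h3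
  choose hfs hff hpf hfp hRf hfR using h4
  choose hTs hqdq using h5
  choose a1 a2 a3 a4 a5 a6 using h6
  choose b1 b2 b3 b4 using h7
  have he : Tendsto (fun n : ℕ => 1/((n:ℝ)+1)) atTop (nhds 0) := tendsto_one_div_add_atTop_nhds_zero_nat
  have he41 : Tendsto (fun n : ℕ => 41 * (1/((n:ℝ)+1))) atTop (nhds 0) := by simpa using he.const_mul 41
  have he3 : Tendsto (fun n : ℕ => 3 * (1/((n:ℝ)+1))) atTop (nhds 0) := by simpa using he.const_mul 3
  let q : ℕ → A := fun n => p n - R n - f n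
  have hqs : ∀ n, star (q n) = q n := fun n => by simp only [q, star_sub, hps, hRs, hfs]
  have hqq : ∀ n, q n * q n = q n := fun n => by
    simp only [q, sub_mul, mul_sub, hpp, hpR, hRp, hRR, hpf, hfp, hRf, hfR, hff]; abel
  have hqn : ∀ n, ‖q n‖ ≤ 1 := fun n => proj_norm (hqs n) (hqq n)
  have hq1s : ∀ n, star (1 - q n) = 1 - q n := fun n => by rw [star_sub, star_one, hqs]
  have hq1q : ∀ n, (1 - q n) * (1 - q n) = 1 - q n := fun n => by
    simp only [sub_mul, mul_sub, one_mul, mul_one, hqq]; abel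
  have hq1n : ∀ n, ‖1 - q n‖ ≤ 1 := fun n => proj_norm (hq1s n) (hq1q n)
  let h : ℕ → A := fun n => (1 - q n) * r * (1 - q n)
  have hhs : ∀ n, IsSelfAdjoint (h n) := fun n => by
    show star ((1 - q n) * r * (1 - q n)) = _
    rw [star_mul, star_mul, hq1s, hrs, ← mul_assoc]
  have hhn : ∀ n, ‖h n‖ ≤ 1 := fun n => by
    simpa using mul_bd (mul_bd (hq1n n) hrn) (hq1n n)
  have ht := fun n => almost_proj_total (hhs n) ((hhn n).trans one_le_two)
  choose t hts htt hth hm htE using ht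
  choose m hm1 hm2 using hm
  have htn : ∀ n, ‖t n‖ ≤ 1 := fun n => proj_norm (hts n) (htt n)
  have hqt : ∀ n, q n * t n = 0 := fun n => by
    rw [hm2 n]
    show q n * ((1 - q n) * r * (1 - q n) * m n) = 0
    simp only [← mul_assoc]
    rw [mul_sub (q n) 1 (q n), mul_one, hqq, sub_self]; simp
  have htq : ∀ n, t n * q n = 0 := fun n => by
    have := congrArg star (hqt n)
    rwa [star_mul, star_zero, hqs, hts] at this
  have hpn : ∀ n, ‖p n‖ ≤ 1 := fun n => proj_norm (hps n) (hpp n)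
  have hRn : ∀ n, ‖R n‖ ≤ 1 := fun n => proj_norm (hRs n) (hRR n)
  have hfn : ∀ n, ‖f n‖ ≤ 1 := fun n => proj_norm (hfs n) (hff n)
  have hr1n : ‖1 - r‖ ≤ 1 := proj_norm (by rw [star_sub, star_one, hrs]) (by noncomm_ring; rw [hrr]; abel)
  have hg'n : ∀ n, ‖(1 - r) * g n * (1 - r)‖ ≤ 1 := fun n => by
    simpa using mul_bd (mul_bd hr1n (hgn n)) hr1n
  have hwn : ∀ n, ‖(1 - g n) * c n‖ ≤ ‖a‖ + 1 := fun n => by simpa using mul_bd (hgn' n) (hcn n)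
  have hdn : ∀ n, ‖d n‖ ≤ ‖a‖ + 2 := fun n => by
    have z1 : ‖q n * ((1 - g n) * c n) * q n‖ ≤ 1 * (‖a‖ + 1) * 1 := mul_bd (mul_bd (hqn n) (hwn n)) (hqn n)
    have z2 := norm_add_le (d n - q n * ((1 - g n) * c n) * q n) (q n * ((1 - g n) * c n) * q n)
    rw [sub_add_cancel] at z2
    have z3 : ‖d n - q n * ((1 - g n) * c n) * q n‖ ≤ 1/((n:ℝ)+1) := b4 n
    have z4 : 1/((n:ℝ)+1) ≤ 1 := by rw [div_le_one (by positivity)]; linarith [Nat.cast_nonneg (α := ℝ) n]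
    linarith
  let A' := bs (fun _ => a) ⟨_, fun _ => le_rfl⟩
  let r' := bs (fun _ => r) ⟨_, fun _ => le_rfl⟩
  let g' := bs g ⟨_, hgn⟩
  let gg' := bs _ ⟨_, hg'n⟩
  let p' := bs p ⟨_, hpn⟩
  let R' := bs R ⟨_, hRn⟩
  let f' := bs f ⟨_, hfn⟩
  let T' := bs T ⟨_, hTn⟩
  let w' := bs _ ⟨_, hwn⟩
  let d' := bs d ⟨_, hdn⟩
  let q' := bs q ⟨_, hqn⟩
  let t' := bs t ⟨_, htn⟩
  let h' := bs h ⟨_, hhn⟩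
  let S' := bs S ⟨_, hSn⟩
  let Ss' := bs (fun n => star (S n)) ⟨5, fun n => by rw [norm_star]; exact hSn n⟩
  have hrr' : qm r' * qm r' = qm r' := by rw [← map_mul]; exact qm_of_eq (fun _ => hrr)
  obtain ⟨hqr, hrq, hd, hss⟩ := ml_alg (a := qm A') (r := qm r') (g := qm g') (g' := qm gg') (p := qm p') (R := qm R')
    (f := qm f') (T := qm T') (w := qm w') (d := qm d') (q := qm q')
    (by rw [← map_sub, ← map_sub]; exact qm_of_eq (fun _ => rfl))
    (by rw [← map_mul, ← map_mul]; exact qm_of_le he a3)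
    (by rw [← map_one qm, ← map_sub, ← map_mul, ← map_mul]; exact qm_of_eq (fun _ => rfl))
    (by rw [← map_mul, ← map_mul]; exact qm_of_le he a4)
    (by rw [← map_mul, ← map_mul]; exact qm_of_le he a5)
    (by rw [← map_mul, ← map_mul]; exact qm_of_le he41 a6)
    (by rw [← map_sub, ← map_mul, ← map_mul]; exact qm_of_le he b1)
    (by rw [← map_mul, ← map_zero qm]; refine qm_of_le he (fun n => ?_)
        show ‖q n * T n - 0‖ ≤ _
        rw [sub_zero]; exact b2 n)
    (by rw [← map_mul]; exact qm_of_eq hpp)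
    (by rw [← map_mul]; exact qm_of_eq hpR)
    (by rw [← map_mul]; exact qm_of_eq hRp)
    (by rw [← map_mul]; exact qm_of_eq hRR)
    (by rw [← map_mul]; exact qm_of_eq hpf)
    (by rw [← map_mul]; exact qm_of_eq hfp)
    (by rw [← map_mul, ← map_zero qm]; exact qm_of_eq hRf)
    (by rw [← map_mul, ← map_zero qm]; exact qm_of_eq hfR)
    (by rw [← map_mul]; exact qm_of_eq hff)
    hrr'
    (by rw [← map_one qm, ← map_sub, ← map_mul]
        refine qm_of_le he (fun n => ?_)
        show ‖(1 - g n) * c n - (1 - g n) * a‖ ≤ _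
        rw [← mul_sub]
        simpa using mul_bd (hgn' n) (a1 n))
    (by rw [← map_mul, ← map_mul]; exact qm_of_le he b4)
  have hh : qm h' = qm r' := by
    have : qm h' = (1 - qm q') * qm r' * (1 - qm q') := by
      rw [← map_one qm, ← map_sub, ← map_mul, ← map_mul]; exact qm_of_eq (fun _ => rfl)
    rw [this, sub_mul, hqr, mul_sub, one_mul, sub_zero, hrq, mul_one, sub_zero]
  have hhh : Tendsto (fun n => 8 * ‖h n * h n - h n‖) atTop (nhds 0) := by
    have h0 : qm (h' * h') = qm h' := by rw [map_mul, hh, hrr']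
    have : Tendsto (fun n => ‖h n * h n - h n‖) atTop (nhds 0) := by
      rw [Metric.tendsto_atTop]
      intro ε hε
      obtain ⟨N, hN⟩ := eventually_atTop.1 (qm_ev h0 hε)
      refine ⟨N, fun n hn => ?_⟩
      rw [Real.dist_0_eq_abs, abs_of_nonneg (norm_nonneg _)]
      exact hN n hn
    simpa using this.const_mul 8
  have htr : qm t' = qm r' := by
    rw [← hh]; exact qm_of_le hhh hth
  have hta : qm (t' * A') = qm 0 := by
    rw [map_mul, htr, ← map_mul]; exact qm_of_eq (fun _ => hra)
  have hat : qm (A' * t') = qm 0 := by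
    rw [map_mul, htr, ← map_mul]; exact qm_of_eq (fun _ => har)
  have hSr' : qm S' * qm r' = qm S' := by
    rw [← map_mul]; exact qm_of_eq hSr
  have hSS' : qm S' * qm Ss' = (1 - qm p') + qm f' := by
    rw [← map_mul, ← map_one qm, ← map_sub, ← map_add]; exact qm_of_le he3 b3
  have hrS : qm r' * qm Ss' = qm Ss' := by
    rw [← map_mul]; refine qm_of_eq (fun n => ?_)
    have := congrArg star (hSr n)
    rwa [star_mul, hrs] at this
  have hY : qm (((1 - q' - t') * S' * t') * (t' * Ss' * (1 - q' - t'))) = qm (1 - q' - t') := by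
    simp only [map_mul, map_sub, map_one, htr]
    calc _ = (1 - qm q' - qm r') * (qm S' * qm r' * (qm r' * qm Ss')) * (1 - qm q' - qm r') := by simp only [mul_assoc]
      _ = _ := by rw [hSr', hrS, hSS', hss]
  have hd' : qm d' = qm (q' * A' * q') := by rw [map_mul, map_mul]; exact hd
  obtain ⟨n, n1, n2, n3, n4⟩ := ((qm_ev hd' hη).and ((qm_ev hta hη).and ((qm_ev hat hη).and (qm_ev hY hη)))).exists
  refine ⟨q n, t n, S n, d n, E n, hfd n, ⟨hqE n, hdE n⟩, ⟨hqs n, hqq n, hts n, htt n, hqt n, htq n⟩, hqdq n, hSn n, n1, ?_, ?_, ?_⟩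
  · have : ‖t n * a - 0‖ < η := n2
    rwa [sub_zero] at this
  · have : ‖a * t n - 0‖ < η := n3
    rwa [sub_zero] at this
  · have : ‖((1 - q n - t n) * S n * t n) * (t n * star (S n) * (1 - q n - t n)) - (1 - q n - t n)‖ < η := n4
    have e : star ((1 - q n - t n) * S n * t n) = t n * star (S n) * (1 - q n - t n) := by
      simp only [star_mul, star_sub, star_one, hqs, hts, mul_assoc]
    rwa [e]

end part12

section part13
set_option linter.unusedSectionVars false
set_option linter.unusedVariables false
variable {A : Type*} [CStarAlgebra A] [PartialOrder A] [StarOrderedRing A]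

lemma corner_inv {s X : A} (hss : s * s = s) (hs : star s = s) (hX : s * X * s = X) (hXs : star X = X)
    (hn : ‖X - s‖ ≤ 1/2) : ∃ N, s * N * s = N ∧ X * N = s ∧ N * X = s ∧ star N = N ∧ ‖N‖ ≤ 2 := by
  have hsX := lft hss hX
  have hXr := rgt hss hX
  set Z := X + (1 - s) with hZ
  have hZ1 : ‖Z - 1‖ ≤ 1/2 := by
    have : Z - 1 = X - s := by rw [hZ]; abel
    rwa [this]
  obtain ⟨u, hu⟩ := isUnit_near_one (x := Z) (by linarith)
  have hZs : star Z = Z := by rw [hZ, star_add, star_sub, star_one, hXs, hs]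
  have hsZ : s * Z = X := by rw [hZ, mul_add, hsX, mul_sub, mul_one, hss]; abel
  have hZs' : Z * s = X := by rw [hZ, add_mul, hXr, sub_mul, one_mul, hss]; abel
  set I : A := ↑u⁻¹ with hI
  have hZI : Z * I = 1 := by rw [← hu, hI, Units.mul_inv]
  have hIZ : I * Z = 1 := by rw [← hu, hI, Units.inv_mul]
  have hIs : star I = I := by
    have h1 : star I * Z = 1 := by
      have := congrArg star hZI
      rwa [star_mul, hZs, star_one] at this
    calc star I = star I * (Z * I) := by rw [hZI, mul_one]
      _ = I := by rw [← mul_assoc, h1, one_mul]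
  have hcom : I * s = s * I := by
    calc I * s = I * (s * Z) * I := by rw [mul_assoc, mul_assoc, hZI, mul_one]
      _ = I * (Z * s) * I := by rw [hsZ, hZs']
      _ = s * I := by rw [← mul_assoc, hIZ, one_mul]
  have hIn : ‖I‖ ≤ 2 := by
    have e : I = 1 - (Z - 1) * I := by rw [sub_mul, hZI, one_mul]; abel
    have h2 : ‖I‖ ≤ ‖(1:A)‖ + ‖(Z - 1) * I‖ := by
      conv_lhs => rw [e]
      exact norm_sub_le _ _
    have h3 : ‖(Z - 1) * I‖ ≤ 1/2 * ‖I‖ := mul_bd hZ1 le_rfl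
    have h4 : ‖(1:A)‖ ≤ 1 := proj_norm (star_one A) (one_mul 1)
    linarith
  refine ⟨s * I, ?_, ?_, ?_, ?_, ?_⟩
  · rw [mul_assoc, mul_assoc, hcom, ← mul_assoc, ← mul_assoc, hss, hss]
  · rw [← hcom, ← mul_assoc, ← hsZ, mul_assoc s, hZI, mul_one, hss]
  · rw [← hcom, mul_assoc, hsX, ← hZs', ← mul_assoc, hIZ, one_mul]
  · rw [star_mul, hIs, hs, hcom]
  · have : ‖s * I‖ ≤ 1 * 2 := mul_bd (proj_norm hs hss) hIn
    linarith

lemma corner_pert (E : StarSubalgebra ℂ A) [FiniteDimensional ℂ E] {q d : A} (hqE : q ∈ E) (hd : d ∈ E)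
    (hqs : star q = q) (hqq : q * q = q) (hqd : q * d * q = d) {η : ℝ} (hη : 0 < η) :
    ∃ D Di, q * D * q = D ∧ q * Di * q = Di ∧ D * Di = q ∧ Di * D = q ∧ ‖D - d‖ ≤ η ∧ (star d = d → star D = D) := by
  obtain ⟨t, ht0, ht1, u, hu⟩ := perturb_unit (finspec E hd) hη
  have h1 := lft hqq hqd
  have h2 := rgt hqq hqd
  set Z := d + (t:ℂ) • (1:A) with hZ
  set I : A := ↑u⁻¹ with hI
  have hZI : Z * I = 1 := by rw [← hu, hI, Units.mul_inv]
  have hIZ : I * Z = 1 := by rw [← hu, hI, Units.inv_mul]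
  have hqZ : q * Z = Z * q := by rw [hZ, mul_add, add_mul, h1, h2]; simp
  have hqI : q * I = I * q := by
    calc q * I = I * (Z * q) * I := by rw [← mul_assoc, hIZ, one_mul]
      _ = I * (q * Z) * I := by rw [hqZ]
      _ = I * q := by rw [mul_assoc, mul_assoc, hZI, mul_one]
  have hZq : Z * q = d + (t:ℂ) • q := by rw [hZ, add_mul, h2]; simp
  refine ⟨Z * q, I * q, ?_, ?_, ?_, ?_, ?_, ?_⟩
  · rw [← mul_assoc, hqZ, mul_assoc, mul_assoc, hqq, hqq]
  · rw [← mul_assoc, hqI, mul_assoc, mul_assoc, hqq, hqq]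
  · rw [← hqZ, ← mul_assoc, mul_assoc q, hZI, mul_one, hqq]
  · rw [← hqI, ← mul_assoc, mul_assoc q, hIZ, mul_one, hqq]
  · rw [hZq, add_sub_cancel_left, norm_smul, Complex.norm_real, Real.norm_of_nonneg ht0.le]
    have := proj_norm hqs hqq
    nlinarith
  · intro hds
    rw [hZq, star_add, star_smul, hds, hqs]; simp

lemma lemML (hs : IsSimpleCStarAlgebra A) (hinf : ¬ FiniteDimensional ℂ A) [Nontrivial A]
    {B : StarSubalgebra ℂ A} (hB : IsClosed (B : Set A))
    (hl : IsCentrallyLarge B) (hTR : TracialTopRankZeroIn B)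
    {a r : A} (hr : r ∈ B) (hrs : star r = r) (hrr : r * r = r) (hr0 : r ≠ 0)
    (hra : r * a = 0) (har : a * r = 0) {ε : ℝ} (hε : 0 < ε) :
    ∃ x, IsUnit x ∧ ‖x - a‖ < ε ∧ (star a = a → star x = x) := by
  classical
  set η := min (1/4) (ε / 8) with hηd
  have hη : 0 < η := by positivity
  have hη1 : η ≤ 1/4 := min_le_left _ _
  have hη2 : η ≤ ε / 8 := min_le_right _ _
  obtain ⟨q, t, S, d0, E, hfd, ⟨hqE, hd0E⟩, ⟨hqs, hqq, hts, htt, hqt, htq⟩, hqd0, hSn, b1, b2, b3, b4⟩ :=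
    ml_seq hs hinf hB hl hTR hr hrs hrr hr0 hra har hη
  obtain ⟨d, hdE, hqd, hdn, hds⟩ : ∃ d ∈ E, q * d * q = d ∧ ‖d - q * a * q‖ ≤ η ∧ (star a = a → star d = d) := by
    by_cases ha : star a = a
    · refine ⟨(2:ℂ)⁻¹ • (d0 + star d0), ?_, ?_, ?_, ?_⟩
      · exact E.smul_mem (add_mem hd0E (star_mem hd0E)) _
      · have : q * star d0 * q = star d0 := by
          have := congrArg star hqd0
          rwa [star_mul, star_mul, hqs, ← mul_assoc] at this
        rw [mul_smul_comm, smul_mul_assoc, mul_add, add_mul, hqd0, this]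
      · have h1 : ‖star d0 - q * a * q‖ < η := by
          rw [← norm_star] at b1
          simpa only [star_sub, star_mul, hqs, ha, star_star, mul_assoc] using b1
        have e : (2:ℂ)⁻¹ • (d0 + star d0) - q * a * q = (2:ℂ)⁻¹ • ((d0 - q * a * q) + (star d0 - q * a * q)) := by
          module
        rw [e, norm_smul]
        have := norm_add_le (d0 - q * a * q) (star d0 - q * a * q)
        have h2 : ‖(2:ℂ)⁻¹‖ = 2⁻¹ := by simp
        rw [h2]
        linarith
      · intro _
        rw [star_smul, star_add, star_star, add_comm]; simp
    · exact ⟨d0, hd0E, hqd0, b1.le, fun h => absurd h ha⟩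
  obtain ⟨D, Di, hD, hDi, hDD, hDD', hDn, hDs⟩ := corner_pert E hqE hdE hqs hqq hqd hη
  set s := 1 - q - t with hsd
  have hss : star s = s := by rw [hsd, star_sub, star_sub, star_one, hqs, hts]
  have hs2 : s * s = s := by
    rw [hsd]; simp only [sub_mul, mul_sub, one_mul, mul_one, hqq, htt, hqt, htq]; abel
  have hqs' : q * s = 0 := by rw [hsd, mul_sub, mul_sub, mul_one, hqq, hqt]; simp
  have hsq : s * q = 0 := by rw [hsd, sub_mul, sub_mul, one_mul, hqq, htq]; simp
  have hts' : t * s = 0 := by rw [hsd, mul_sub, mul_sub, mul_one, htt, htq]; simp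
  have hst : s * t = 0 := by rw [hsd, sub_mul, sub_mul, one_mul, htt, hqt]; simp
  have h1 : q + t + s = 1 := by rw [hsd]; abel
  have hqts : q + s = 1 - t := by rw [hsd]; abel
  clear_value s
  have hsn : ‖s‖ ≤ 1 := proj_norm hss hs2
  have htn : ‖t‖ ≤ 1 := proj_norm hts htt
  have hqn : ‖q‖ ≤ 1 := proj_norm hqs hqq
  obtain ⟨Y, hYd⟩ : ∃ Y, Y = s * S * t := ⟨_, rfl⟩
  rw [← hYd] at b4
  have hYn : ‖Y‖ ≤ 5 := by
    have := mul_bd (mul_bd hsn hSn) htn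
    rw [hYd]; linarith
  have hY : s * Y * t = Y := by
    rw [hYd]; simp only [mul_assoc]; rw [htt, ← mul_assoc, hs2]
  have hsY : s * Y = Y := lft hs2 hY
  have hYs : star Y * s = star Y := by
    have := congrArg star hsY
    rwa [star_mul, hss] at this
  obtain ⟨N, hN, hYN, hNY, hNs, hNn⟩ := corner_inv (X := Y * star Y) hs2 hss
    (by rw [← mul_assoc, hsY, mul_assoc, hYs]) (by rw [star_mul, star_star]) (by linarith)
  obtain ⟨K, hK⟩ : ∃ K, K = t - star Y * N * Y := ⟨_, rfl⟩
  have hKs : star K = K := by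
    rw [hK, star_sub, hts]; simp only [star_mul, star_star, hNs, mul_assoc]
  have hKn : ‖K‖ ≤ 51 := by
    have z1 : ‖star Y * N * Y‖ ≤ 5 * 2 * 5 := mul_bd (mul_bd (by rw [norm_star]; exact hYn) hNn) hYn
    have := norm_sub_le t (star Y * N * Y)
    rw [hK]; linarith
  obtain ⟨a', ha'⟩ : ∃ a', a' = (1 - t) * a * (1 - t) := ⟨_, rfl⟩
  have ht1s : star (1 - t) = 1 - t := by rw [star_sub, star_one, hts]
  have ht1n : ‖1 - t‖ ≤ 1 := proj_norm ht1s (by simp only [sub_mul, mul_sub, one_mul, mul_one, htt]; abel)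
  have ha's : star a = a → star a' = a' := by
    intro h; rw [ha', star_mul, star_mul, ht1s, h, mul_assoc]
  have haa : ‖a' - a‖ ≤ 2 * η := by
    have e : a' - a = -((1 - t) * (a * t)) - t * a := by rw [ha']; noncomm_ring
    have z1 : ‖(1 - t) * (a * t)‖ ≤ 1 * η := mul_bd ht1n b3.le
    rw [e]
    have := norm_sub_le (-((1 - t) * (a * t))) (t * a)
    rw [norm_neg] at this
    linarith
  set ε' : ℝ := ε / 244 with hε'
  have hε'0 : 0 < ε' := by positivity
  have hu := block_unit (q := q) (r := t) (s := s) (D := D) (Di := Di) (Y := Y) (N := N) (K := K)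
    (b := q * a' * s) (c := s * a' * q) (z := s * a' * s) hqq htt hs2 h1 hqt htq hqs' hsq hts' hst hD hDi hDD hDD'
    hY hN hYN hNY hts hss hK 
    (by simp only [mul_assoc]; rw [hs2, ← mul_assoc, hqq])
    (by simp only [mul_assoc]; rw [hqq, ← mul_assoc, hs2])
    (by simp only [mul_assoc]; rw [hs2, ← mul_assoc, hs2])
    (ε := (ε':ℂ)) (by exact_mod_cast hε'0.ne')
  refine ⟨_, hu, ?_, ?_⟩
  · have e1 : a' = q * a' * q + q * a' * s + s * a' * q + s * a' * s := by
      have : a' = (q + s) * a' * (q + s) := by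
        rw [hqts, ha']
        have ht2 : (1 - t) * (1 - t) = 1 - t := by simp only [sub_mul, mul_sub, one_mul, mul_one, htt]; abel
        simp only [mul_assoc]
        rw [ht2, ← mul_assoc (1 - t) (1 - t), ht2]
      conv_lhs => rw [this]
      noncomm_ring
    have e2 : q * a' * q = q * a * q := by
      rw [ha']
      calc _ = (q * (1 - t)) * a * ((1 - t) * q) := by simp only [mul_assoc]
        _ = _ := by rw [mul_sub, sub_mul 1 t q, hqt, htq]; simp
    have e3 : D + (ε':ℂ) • K + (ε':ℂ) • Y + (ε':ℂ) • star Y + q * a' * s + s * a' * q + s * a' * s - a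
        = (D - d) + (d - q * a * q) + (a' - a) + (ε':ℂ) • (K + Y + star Y) := by
      conv_rhs => rw [e1, e2]
      simp only [smul_add]
      abel
    rw [e3]
    have n1 : ‖(ε':ℂ) • (K + Y + star Y)‖ ≤ ε' * 61 := by
      rw [norm_smul, Complex.norm_real, Real.norm_of_nonneg hε'0.le]
      have z1 := norm_add_le (K + Y) (star Y)
      have z2 := norm_add_le K Y
      rw [norm_star] at z1
      gcongr
      linarith
    have z1 := norm_add_le ((D - d) + (d - q * a * q) + (a' - a)) ((ε':ℂ) • (K + Y + star Y))
    have z2 := norm_add_le ((D - d) + (d - q * a * q)) (a' - a)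
    have z3 := norm_add_le (D - d) (d - q * a * q)
    have z4 : ε' * 61 = ε / 4 := by rw [hε']; ring
    linarith
  · intro ha
    have e1 := ha's ha
    have e2 := hDs (hds ha)
    simp only [star_add, star_smul, star_mul, star_star, hKs, e1, e2, hqs, hss]
    simp only [RCLike.star_def, Complex.conj_ofReal, mul_assoc]
    abel

end part13

section part14
set_option linter.unusedSectionVars false
variable {A : Type*} [CStarAlgebra A] [PartialOrder A] [StarOrderedRing A]

lemma compress_bd {r b : A} {θ : ℝ} (hrs : star r = r) (hrr : r * r = r) (h1 : ‖r * b‖ ≤ θ) (h2 : ‖b * r‖ ≤ θ) :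
    ‖(1 - r) * b * (1 - r) - b‖ ≤ 2 * θ ∧ r * ((1 - r) * b * (1 - r)) = 0 ∧ ((1 - r) * b * (1 - r)) * r = 0 := by
  have h3 : ‖1 - r‖ ≤ 1 := proj_norm (by rw [star_sub, star_one, hrs]) (by simp only [sub_mul, mul_sub, one_mul, mul_one, hrr]; abel)
  have e1 : r * (1 - r) = 0 := by rw [mul_sub, mul_one, hrr, sub_self]
  have e2 : (1 - r) * r = 0 := by rw [sub_mul, one_mul, hrr, sub_self]
  refine ⟨?_, by rw [← mul_assoc, ← mul_assoc, e1, zero_mul, zero_mul], by rw [mul_assoc, e2, mul_zero]⟩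
  have e : (1 - r) * b * (1 - r) - b = -((1 - r) * (b * r)) - r * b := by noncomm_ring
  rw [e]
  have z1 : ‖(1 - r) * (b * r)‖ ≤ 1 * θ := mul_bd h3 h2
  have := norm_sub_le (-((1 - r) * (b * r))) (r * b)
  rw [norm_neg] at this
  linarith

lemma sa_case (hs : IsSimpleCStarAlgebra A) (hinf : ¬ FiniteDimensional ℂ A) [Nontrivial A]
    {B : StarSubalgebra ℂ A} (hB : IsClosed (B : Set A))
    (hl : IsCentrallyLarge B) (hTR : TracialTopRankZeroIn B)
    {a : A} (ha : star a = a) {ε : ℝ} (hε : 0 < ε) : ∃ x, IsUnit x ∧ star x = x ∧ ‖x - a‖ < ε := by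
  by_cases hu : IsUnit a
  · exact ⟨a, hu, ha, by simpa using hε⟩
  have hu' : ¬ IsUnit (a * star a) := by
    rw [ha, ← sq]; exact fun h => hu ((isUnit_pow_iff two_ne_zero).1 h)
  set θ := ε / 8 with hθ
  have hθ0 : 0 < θ := by positivity
  obtain ⟨k, hk, hk0, n, hns, hnn, hkn, hnk, hna⟩ := lemA1 hB hl hu' hθ0
  have han : ‖a * n - a‖ ≤ θ := by
    rw [← norm_star, star_sub, star_mul, ha, hns]; exact hna
  obtain ⟨b, hb⟩ : ∃ b, b = n * a * n := ⟨_, rfl⟩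
  have hbs : star b = b := by rw [hb, star_mul, star_mul, ha, hns, mul_assoc]
  have hba : ‖b - a‖ ≤ 2 * θ := by
    have e : b - a = n * (a * n - a) + (n * a - a) := by rw [hb]; noncomm_ring
    have z1 : ‖n * (a * n - a)‖ ≤ 1 * θ := mul_bd hnn han
    rw [e]
    have := norm_add_le (n * (a * n - a)) (n * a - a)
    linarith
  have hkb : k * b = 0 := by rw [hb, ← mul_assoc, ← mul_assoc, hkn]; simp
  obtain ⟨r, hr, hrs, hrr, hr0, V, m, m', -, -, hm, -⟩ :=
    lemA2 hs hl hTR hk hk0 (show 0 < θ / (‖b‖ + 1) by positivity)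
  have hbd : θ / (‖b‖ + 1) * ‖b‖ ≤ θ := by
    rw [div_mul_eq_mul_div, div_le_iff₀ (by positivity)]; nlinarith [norm_nonneg b]
  have h1 : ‖r * b‖ ≤ θ := by
    have e : r * b = (r - m * k) * b := by rw [sub_mul, mul_assoc, hkb]; simp
    rw [e]
    exact (mul_bd hm le_rfl).trans hbd
  have h2 : ‖b * r‖ ≤ θ := by
    rw [← norm_star, star_mul, hbs, hrs]; exact h1
  obtain ⟨c1, c2, c3⟩ := compress_bd hrs hrr h1 h2
  obtain ⟨x, hx, hxn, hxs⟩ := lemML hs hinf hB hl hTR hr hrs hrr hr0 c2 c3 hθ0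
  refine ⟨x, hx, hxs ?_, ?_⟩
  · rw [star_mul, star_mul, star_sub, star_one, hrs, hbs, mul_assoc]
  · have e : x - a = (x - (1 - r) * b * (1 - r)) + ((1 - r) * b * (1 - r) - b) + (b - a) := by abel
    rw [e]
    have z1 := norm_add_le ((x - (1 - r) * b * (1 - r)) + ((1 - r) * b * (1 - r) - b)) (b - a)
    have z2 := norm_add_le (x - (1 - r) * b * (1 - r)) ((1 - r) * b * (1 - r) - b)
    linarith

lemma gen_case (hs : IsSimpleCStarAlgebra A) (hinf : ¬ FiniteDimensional ℂ A) [Nontrivial A]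
    {B : StarSubalgebra ℂ A} (hB : IsClosed (B : Set A))
    (hl : IsCentrallyLarge B) (hTR : TracialTopRankZeroIn B)
    {a : A} (ha : ¬ IsUnit (a * star a)) {ε : ℝ} (hε : 0 < ε) : ∃ x, IsUnit x ∧ ‖x - a‖ < ε := by
  set θ := ε / 8 with hθ
  have hθ0 : 0 < θ := by positivity
  have hbd : ∀ b : A, θ / (‖b‖ + 1) * ‖b‖ ≤ θ := by
    intro b
    rw [div_mul_eq_mul_div, div_le_iff₀ (by positivity)]; nlinarith [norm_nonneg b]
  obtain ⟨k1, hk1, hk10, n, hns, hnn, hkn, hnk, hna⟩ := lemA1 hB hl ha hθ0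
  obtain ⟨a1, ha1⟩ : ∃ b, b = n * a := ⟨_, rfl⟩
  rw [← ha1] at hna
  have hka1 : k1 * a1 = 0 := by rw [ha1, ← mul_assoc, hkn, zero_mul]
  obtain ⟨r1, hr1, hr1s, hr1r, hr10, -, m, -, -, -, hm, -⟩ :=
    lemA2 hs hl hTR hk1 hk10 (show 0 < θ / (‖a1‖ + 1) by positivity)
  have h1 : ‖r1 * a1‖ ≤ θ := by
    have e : r1 * a1 = (r1 - m * k1) * a1 := by rw [sub_mul, mul_assoc, hka1]; simp
    rw [e]
    exact (mul_bd hm le_rfl).trans (hbd a1)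
  obtain ⟨a2, ha2⟩ : ∃ b, b = a1 - r1 * a1 := ⟨_, rfl⟩
  have hra2 : r1 * a2 = 0 := by rw [ha2, mul_sub, ← mul_assoc, hr1r, sub_self]
  have ha2n : ‖a2 - a1‖ ≤ θ := by rw [ha2, sub_sub_cancel_left, norm_neg]; exact h1
  have hnu : ¬ IsUnit (star a2 * star (star a2)) := by
    rw [star_star]
    intro hu
    have hsp : IsStrictlyPositive (star a2 * a2) := 
      IsUnit.isStrictlyPositive hu (star_mul_self_nonneg a2)
    have hc := CFC.conjugate_rpow_neg_one_half (star a2 * a2)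
    set h := (star a2 * a2) ^ (-(1/2) : ℝ) with hh
    have hhs : star h = h := (IsSelfAdjoint.of_nonneg CFC.rpow_nonneg).star_eq
    refine lemF hs hinf hB hl hTR hr1 hr1s hr1r hr10 (u := a2 * h) ?_ (by rw [← mul_assoc, hra2, zero_mul])
    rw [star_mul, hhs, ← hc]; simp only [mul_assoc]
  obtain ⟨k2, hk2, hk20, n2, hn2s, hn2n, hkn2, hnk2, hna2⟩ := lemA1 hB hl hnu hθ0
  obtain ⟨a3, ha3⟩ : ∃ b, b = a2 * n2 := ⟨_, rfl⟩
  have ha3n : ‖a3 - a2‖ ≤ θ := by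
    rw [← norm_star, star_sub, ha3, star_mul, hn2s]; exact hna2
  have hra3 : r1 * a3 = 0 := by rw [ha3, ← mul_assoc, hra2, zero_mul]
  have hak3 : a3 * k2 = 0 := by rw [ha3, mul_assoc, hnk2, mul_zero]
  obtain ⟨x, hx, hx0⟩ : ∃ x ∈ B, k2 * x * r1 ≠ 0 := by
    by_contra hcon
    push Not at hcon
    obtain ⟨e, ⟨L, hL, hLe⟩, he⟩ := bsimple hs hl hr1 hr10
    have hz : ∀ L : List (A × A), (∀ u ∈ L, u.1 ∈ B ∧ u.2 ∈ B) → 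
        k2 * (L.map (fun u => u.1 * r1 * u.2)).sum = 0 := by
      intro L
      induction L with
      | nil => simp
      | cons u L ih =>
        intro h
        rw [List.map_cons, List.sum_cons, mul_add, ih (fun v hv => h v (List.mem_cons_of_mem _ hv)), add_zero,
          ← mul_assoc, ← mul_assoc, hcon u.1 (h u List.mem_cons_self).1, zero_mul]
    have h0 := hz L hL
    rw [hLe] at h0
    obtain ⟨v, hv⟩ := isUnit_near_one (x := e) (by linarith)
    rw [← hv] at h0
    apply hk20
    exact (Units.mul_left_eq_zero v).1 h0
  obtain ⟨k, hk⟩ : ∃ k, k = k2 * x * r1 := ⟨_, rfl⟩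
  rw [← hk] at hx0
  have hkB : k ∈ B := by rw [hk]; exact mul_mem (mul_mem hk2 hx) hr1
  have hka : k * a3 = 0 := by rw [hk, mul_assoc, hra3, mul_zero]
  have hak : a3 * k = 0 := by rw [hk, ← mul_assoc, ← mul_assoc, hak3, zero_mul, zero_mul]
  obtain ⟨r, hr, hrs, hrr, hr0, V, m, m', hV1, hV2, hm, hm'⟩ :=
    lemA2 hs hl hTR hkB hx0 (show 0 < θ / (‖a3‖ + 1) by positivity)
  have hVn : ‖V‖ ≤ 1 := isom_norm hV1
  obtain ⟨b, hb⟩ : ∃ b, b = a3 * V := ⟨_, rfl⟩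
  have h2 : ‖r * b‖ ≤ θ := by
    have e : r * b = (r - m * k) * a3 * V := by rw [hb, sub_mul, mul_assoc m, hka, mul_zero, sub_zero, mul_assoc]
    rw [e]
    have := mul_bd (mul_bd hm (le_refl ‖a3‖)) hVn
    have := hbd a3
    linarith
  have h3 : ‖b * r‖ ≤ θ := by
    have e : b * r = a3 * (V * r - k * m') := by
      rw [hb, mul_sub, ← mul_assoc a3 k, hak, zero_mul, sub_zero, mul_assoc]
    rw [e]
    have := mul_bd (le_refl ‖a3‖) hm'
    have := hbd a3
    linarith
  obtain ⟨c1, c2, c3⟩ := compress_bd hrs hrr h2 h3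
  obtain ⟨y, hy, hyn, -⟩ := lemML hs hinf hB hl hTR hr hrs hrr hr0 c2 c3 hθ0
  have hVu : IsUnit (star V) := ⟨⟨star V, V, hV1, hV2⟩, rfl⟩
  refine ⟨y * star V, hy.mul hVu, ?_⟩
  have hyb : ‖y - b‖ ≤ 3 * θ := by
    have e : y - b = (y - (1 - r) * b * (1 - r)) + ((1 - r) * b * (1 - r) - b) := by abel
    rw [e]
    have := norm_add_le (y - (1 - r) * b * (1 - r)) ((1 - r) * b * (1 - r) - b)
    linarith
  have h4 : ‖y * star V - a3‖ ≤ 3 * θ := by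
    have e : y * star V - a3 = (y - b) * star V := by rw [sub_mul, hb, mul_assoc a3, hV2, mul_one]
    rw [e]
    have := mul_bd hyb (show ‖star V‖ ≤ 1 by rw [norm_star]; exact hVn)
    linarith
  have e : y * star V - a = (y * star V - a3) + (a3 - a2) + (a2 - a1) + (a1 - a) := by abel
  rw [e]
  have z1 := norm_add_le ((y * star V - a3) + (a3 - a2) + (a2 - a1)) (a1 - a)
  have z2 := norm_add_le ((y * star V - a3) + (a3 - a2)) (a2 - a1)
  have z3 := norm_add_le (y * star V - a3) (a3 - a2)
  linarith

end part14

/-- If `A` is an infinite-dimensional unital simple C*-algebra and `B ⊆ A` is a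
centrally large subalgebra with tracial topological rank zero, then `A` has
stable rank one (the invertible elements are dense in `A`) and real rank zero
(the invertible self-adjoint elements are dense in the self-adjoint
elements). -/
theorem stableRankOne_and_realRankZero_of_centrallyLarge_trZero
    {A : Type*} [CStarAlgebra A] [PartialOrder A] [StarOrderedRing A]
    (hsimple : IsSimpleCStarAlgebra A)
    (hinfdim : ¬ FiniteDimensional ℂ A)
    (B : StarSubalgebra ℂ A) (hBclosed : IsClosed (B : Set A))
    (hlarge : IsCentrallyLarge B)
    (hTR : TracialTopRankZeroIn B) :
    Dense {x : A | IsUnit x} ∧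
    (∀ a : A, IsSelfAdjoint a →
      a ∈ closure {x : A | IsSelfAdjoint x ∧ IsUnit x}) := by
  have hnt : Nontrivial A := nontriv_of_infdim hinfdim
  constructor
  · intro a
    rw [Metric.mem_closure_iff]
    intro ε hε
    by_cases h1 : IsUnit (a * star a)
    · by_cases h2 : IsUnit (star a * star (star a))
      · refine ⟨a, ?_, by simpa using hε⟩
        rw [star_star] at h2
        obtain ⟨u, hu⟩ := h1
        obtain ⟨v, hv⟩ := h2
        have e1 : a * (star a * (↑u⁻¹ : A)) = 1 := by rw [← mul_assoc, ← hu, Units.mul_inv]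
        have e2 : ((↑v⁻¹ : A) * star a) * a = 1 := by rw [mul_assoc, ← hv, Units.inv_mul]
        have e3 : ((↑v⁻¹ : A) * star a) = star a * (↑u⁻¹ : A) := left_inv_eq_right_inv e2 e1
        exact ⟨⟨a, star a * (↑u⁻¹ : A), e1, by rw [← e3, e2]⟩, rfl⟩
      · obtain ⟨x, hx, hxn⟩ := gen_case hsimple hinfdim hBclosed hlarge hTR h2 hε
        refine ⟨star x, hx.star, ?_⟩
        rw [dist_comm, dist_eq_norm, ← norm_star, star_sub, star_star]
        exact hxn
    · obtain ⟨x, hx, hxn⟩ := gen_case hsimple hinfdim hBclosed hlarge hTR h1 hε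
      exact ⟨x, hx, by rw [dist_comm, dist_eq_norm]; exact hxn⟩
  · intro a ha
    rw [Metric.mem_closure_iff]
    intro ε hε
    obtain ⟨x, hx, hxs, hxn⟩ := sa_case hsimple hinfdim hBclosed hlarge hTR (a := a) ha hε
    exact ⟨x, ⟨hxs, hx⟩, by rw [dist_comm, dist_eq_norm]; exact hxn⟩
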